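/- Let p and q be multiplicatively independent integers, both greater than 1, and set λ = log q / log p. Then λ has finite irrationality measure: there exists a real number ν such that there are only finitely many pairs (a, b) of integers with b ≥ 1 satisfying |λ − a/b| < 1/b^ν. -/

import Mathlib

/-!
The theorem is a case of Baker's method: a lower bound for the linear form
`b log q - a log p` which depends only polynomially on `b`. The polynomial dependence is obtained
with Fel'dman's polynomials.

Write `λ = log q / log p` and choose a natural number `h` with `b ≤ e ^ h`. It suffices to show
that `|λ - a / b| > e ^ (-ν h)` for `h` large, with `ν` depending only on `p, q` (`core`): taking
`h = ⌈log b⌉` makes the right-hand side at least `b ^ (-2ν)`.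

Suppose the bound fails. Consider the exponential polynomials
`F(z) = ∑ c(n, l₁, l₂) Δₙ^(m₀)(z) (l₁ + l₂ ρ) ^ m₁ p ^ (l₁ z) q ^ (l₂ z)`, with `n < D` and
`l₁, l₂ < L` (`auxF`).
* For `ρ = λ` the family indexed by `(m₀, m₁)` is closed under differentiation, so that it is
  accessible to complex analysis.
* For `ρ = a / b` the values at natural numbers are rational with controlled denominators: `Δₙ` is
  a product of binomial polynomials of degree at most `h`, and its `m`-th derivative takes at
  integers values whose denominators divide `lcm(1, …, h) ^ m ≤ e ^ (O(h m))` (`blockP_deriv_int`,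
  `auxF_int`).
* As `λ` is extremely close to `a / b`, the two versions are extremely close (`norm_auxF_sub_le`).

Siegel's lemma gives integers `c`, not all zero and of size `e ^ (O(h))`, for which the rational
version vanishes for all `m₀, m₁ < T` at all `s < h` (`siegel_auxF`). If it vanishes at `s < S` for
`m₀ + m₁ < T`, then all derivatives of order `< T / 2` of the analytic version, for
`m₀ + m₁ < T / 2`, are tiny at these `s`; Newton interpolation with multiple nodes
(`interp_bound`) makes the analytic version, hence the rational one, tiny at all `s < G S`, so tiny
that the rational one has to be zero there (`extrapolation_step`). Seven such steps reach
`h G ^ 7` zeros, which is the number `D L ^ 2` of unknowns. A nonzero exponential polynomial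
cannot have that many zeros at consecutive integers when the numbers `p ^ l₁ q ^ l₂` are distinct,
which is where multiplicative independence enters (`exp_poly_zero`, `nonvanishing`).

The parameters are `G = 2 E ^ 6`, `ℓ = E G`, `L = ℓ ^ 2`, `T = ℓ ^ 3`, `D = 2 h ℓ ^ 2`, so that
`D L ^ 2 = 2 T ^ 2 h = h G ^ 7`. Each step interpolates on a circle `2 E` times larger than the
range of `s`, which gains a factor `E ^ (-S T / 2)`; a fixed `E` with `log E` large in terms of
`p, q` suffices, so no parameter other than `D` depends on `h`.
-/

/-- Integers `p, q > 1` are multiplicatively independent. -/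
def MultIndepPair (p q : ℕ) : Prop :=
  ∀ α β : ℤ, (p : ℝ) ^ α * (q : ℝ) ^ β = 1 → α = 0 ∧ β = 0

open Nat

/-! ### Newton interpolation with repeated nodes -/

/-- `2πi` times the divided difference of `f` at the `k` nodes `a i, …, a (i + k - 1)`, as a contour
integral over the circle `|z| = R`. This makes sense for repeated nodes, provided all of them
lie inside the circle. -/
noncomputable def ddiff (f : ℂ → ℂ) (R : ℝ) (a : ℕ → ℂ) (i k : ℕ) : ℂ :=
  ∮ z in C(0, R), f z * ∏ j ∈ Finset.range k, (z - a (i + j))⁻¹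

lemma sub_ne_zero_of_sphere {R : ℝ} {z a : ℂ} (hz : z ∈ Metric.sphere (0:ℂ) R) (ha : ‖a‖ < R) :
    z - a ≠ 0 := by
  intro h
  rw [sub_eq_zero] at h
  subst h
  simp at hz
  linarith

lemma circleIntegrable_ddiff {f : ℂ → ℂ} (hf : Differentiable ℂ f) {R : ℝ} (hR : 0 < R)
    {a : ℕ → ℂ} (k : ℕ) (ha : ∀ j < k, ‖a j‖ < R) :
    CircleIntegrable (fun z => f z * ∏ j ∈ Finset.range k, (z - a j)⁻¹) 0 R := by
  apply ContinuousOn.circleIntegrable hR.le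
  refine hf.continuous.continuousOn.mul (continuousOn_finsetProd _ fun j hj => ?_)
  refine ContinuousOn.inv₀ (by fun_prop) fun z hz => ?_
  exact sub_ne_zero_of_sphere hz (ha j (Finset.mem_range.mp hj))

/-- Cauchy's formula for derivatives, i.e. the value of the divided difference at `k + 1` equal
nodes. -/
lemma circleIntegral_div_pow {f : ℂ → ℂ} (hf : Differentiable ℂ f) {R : ℝ} (hR : 0 < R)
    {a : ℂ} (ha : ‖a‖ < R) (k : ℕ) :
    (k ! : ℂ) * ∮ z in C(0, R), f z * ((z - a)⁻¹) ^ (k + 1) =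
      2 * Real.pi * Complex.I * iteratedDeriv k f a := by
  induction k generalizing f with
  | zero =>
    have := (hf.diffContOnCl (s := Metric.ball (0:ℂ) R)).circleIntegral_sub_inv_smul
      (w := a) (by simpa using ha)
    simpa [mul_comm] using this
  | succ k ih =>
    have hf' : Differentiable ℂ (deriv f) := hf.deriv
    have h1 := ih hf'
    rw [iteratedDeriv_succ', ← h1]
    have h0 : (∮ z in C(0, R), (deriv f z * ((z - a)⁻¹) ^ (k + 1) -
        ((k:ℂ) + 1) * (f z * ((z - a)⁻¹) ^ (k + 1 + 1)))) = 0 := by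
      apply circleIntegral.integral_eq_zero_of_hasDerivWithinAt
        (f := fun z => f z * ((z - a)⁻¹) ^ (k + 1)) hR.le
      intro z hz
      have hne := sub_ne_zero_of_sphere hz ha
      apply HasDerivAt.hasDerivWithinAt
      have := (hf z).hasDerivAt.mul ((((hasDerivAt_id z).sub_const a).inv hne).pow (k + 1))
      refine this.congr_deriv ?_
      simp only [Pi.inv_apply, Pi.pow_apply, id, inv_pow]
      push_cast
      field_simp
      ring
    have hc : ∀ (g : ℂ → ℂ) (m : ℕ), Differentiable ℂ g →
        CircleIntegrable (fun z => g z * ((z - a)⁻¹) ^ m) 0 R := by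
      intro g m hg
      have := circleIntegrable_ddiff hg hR (a := fun _ => a) m (fun _ _ => ha)
      simpa using this
    have hc2 : CircleIntegrable (fun z => ((k:ℂ) + 1) * (f z * ((z - a)⁻¹) ^ (k + 1 + 1))) 0 R :=
      (hc f (k + 1 + 1) hf).const_smul
    rw [circleIntegral.integral_sub (hc _ _ hf') hc2,
      circleIntegral.integral_const_mul, sub_eq_zero] at h0
    rw [h0, Nat.factorial_succ]
    push_cast
    ring

/-- The recursion of divided differences, stated without division so that it also holds when the
two extreme nodes coincide. -/
lemma ddiff_succ {f : ℂ → ℂ} (hf : Differentiable ℂ f) {R : ℝ} (hR : 0 < R)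
    {a : ℕ → ℂ} (i k : ℕ) (ha : ∀ j ≤ i + k + 1, ‖a j‖ < R) :
    ddiff f R a i (k + 2) * (a (i + k + 1) - a i) =
      ddiff f R a (i + 1) (k + 1) - ddiff f R a i (k + 1) := by
  have hint : ∀ i' k', i' + k' ≤ i + k + 2 →
      CircleIntegrable (fun z => f z * ∏ j ∈ Finset.range k', (z - a (i' + j))⁻¹) 0 R :=
    fun i' k' h => circleIntegrable_ddiff hf hR (a := fun j => a (i' + j)) k'
      (fun j hj => ha _ (by omega))
  unfold ddiff
  rw [← circleIntegral.integral_sub (hint _ _ (by omega)) (hint _ _ (by omega)), mul_comm,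
    ← circleIntegral.integral_const_mul]
  apply circleIntegral.integral_congr hR.le
  intro z hz
  have h1 := sub_ne_zero_of_sphere hz (ha i (by omega))
  have h2 := sub_ne_zero_of_sphere hz (ha (i + k + 1) (by omega))
  have e1 : ∏ j ∈ Finset.range (k + 2), (z - a (i + j))⁻¹ =
      (∏ j ∈ Finset.range k, (z - a (i + 1 + j))⁻¹) * (z - a (i + k + 1))⁻¹ * (z - a i)⁻¹ := by
    rw [Finset.prod_range_succ', Finset.prod_range_succ]
    simp [add_assoc, add_comm 1]
  have e2 : ∏ j ∈ Finset.range (k + 1), (z - a (i + 1 + j))⁻¹ =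
      (∏ j ∈ Finset.range k, (z - a (i + 1 + j))⁻¹) * (z - a (i + k + 1))⁻¹ := by
    rw [Finset.prod_range_succ]
    simp [add_assoc, add_comm 1]
  have e3 : ∏ j ∈ Finset.range (k + 1), (z - a (i + j))⁻¹ =
      (∏ j ∈ Finset.range k, (z - a (i + 1 + j))⁻¹) * (z - a i)⁻¹ := by
    rw [Finset.prod_range_succ']
    simp [add_assoc, add_comm 1]
  simp only [e1, e2, e3]
  field_simp
  ring

/-- Newton's interpolation formula with the remainder as a contour integral. -/
lemma newton_formula {f : ℂ → ℂ} (hf : Differentiable ℂ f) {R : ℝ} (hR : 0 < R)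
    {a : ℕ → ℂ} {x : ℂ} (hx : ‖x‖ < R) (n : ℕ) (ha : ∀ j < n, ‖a j‖ < R) :
    2 * Real.pi * Complex.I * f x =
      ∑ k ∈ Finset.range n, ddiff f R a 0 (k + 1) * ∏ j ∈ Finset.range k, (x - a j) +
      (∏ j ∈ Finset.range n, (x - a j)) *
        ∮ z in C(0, R), f z * (∏ j ∈ Finset.range n, (z - a j)⁻¹) * (z - x)⁻¹ := by
  induction n with
  | zero =>
    have := (hf.diffContOnCl (s := Metric.ball (0:ℂ) R)).circleIntegral_sub_inv_smul
      (w := x) (by simpa using hx)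
    simpa [mul_comm] using this.symm
  | succ n ih =>
    rw [ih (fun j hj => ha j (by omega)), Finset.sum_range_succ, Finset.prod_range_succ, add_assoc]
    congr 1
    have hd : (∮ z in C(0, R), f z * (∏ j ∈ Finset.range n, (z - a j)⁻¹) * (z - x)⁻¹) =
        ddiff f R a 0 (n + 1) + (x - a n) *
        ∮ z in C(0, R), f z * (∏ j ∈ Finset.range (n + 1), (z - a j)⁻¹) * (z - x)⁻¹ := by
      have hi1 : CircleIntegrable
          (fun z => f z * ∏ j ∈ Finset.range (n + 1), (z - a (0 + j))⁻¹) 0 R := by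
        simpa using circleIntegrable_ddiff hf hR (a := a) (n + 1) ha
      have hi2 : CircleIntegrable
          (fun z => f z * (∏ j ∈ Finset.range (n + 1), (z - a j)⁻¹) * (z - x)⁻¹) 0 R := by
        have := circleIntegrable_ddiff hf hR (a := fun j => if j < n + 1 then a j else x) (n + 2)
          (fun j hj => by split_ifs with h; exacts [ha j h, hx])
        convert this using 2 with z
        rw [Finset.prod_range_succ _ (n + 1)]
        simp only [lt_irrefl, if_false, ← mul_assoc]
        congr 2
        apply Finset.prod_congr rfl
        intro j hj
        simp [Finset.mem_range.mp hj]
      have hi3 : CircleIntegrable (fun z => (x - a n) *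
          (f z * (∏ j ∈ Finset.range (n + 1), (z - a j)⁻¹) * (z - x)⁻¹)) 0 R := hi2.const_smul
      unfold ddiff
      rw [← circleIntegral.integral_const_mul, ← circleIntegral.integral_add hi1 hi3]
      apply circleIntegral.integral_congr hR.le
      intro z hz
      have h1 := sub_ne_zero_of_sphere hz (ha n (by omega))
      have h2 := sub_ne_zero_of_sphere hz hx
      simp only [Finset.prod_range_succ, zero_add]
      field_simp
      ring
    rw [hd]
    ring

/-- Divided differences at the nodes `0, …, S - 1`, each repeated `T` times (the `j`-th node is
`j / T`), are small if the derivatives of order `< T` are small at the nodes. Equal extreme nodes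
are handled by Cauchy's formula; otherwise the extreme nodes are at distance at least
`(k + 1) / (2 T)`, and the recursion loses a factor `4 T / (k + 1)`. -/
lemma ddiff_bound {f : ℂ → ℂ} (hf : Differentiable ℂ f) {R : ℝ} {S T : ℕ} (hT : 0 < T)
    (hR : 0 < R) (hSR : (S : ℝ) ≤ R) {η : ℝ} (hη : 0 ≤ η)
    (hd : ∀ s < S, ∀ k < T, ‖iteratedDeriv k f (s : ℂ)‖ ≤ η) (k i : ℕ) (hik : i + k < S * T) :
    ‖ddiff f R (fun j => ((j / T : ℕ) : ℂ)) i (k + 1)‖ ≤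
      2 * Real.pi * η * ((4 * T) ^ k / k !) := by
  have hnode : ∀ j < S * T, j / T < S := fun j hj => Nat.div_lt_of_lt_mul (by rwa [mul_comm])
  have hlt : ∀ j < S * T, ‖((j / T : ℕ) : ℂ)‖ < R := by
    intro j hj
    rw [Complex.norm_natCast]
    exact lt_of_lt_of_le (by exact_mod_cast hnode j hj) hSR
  have hT1 : (1:ℝ) ≤ T := by exact_mod_cast hT
  induction k generalizing i with
  | zero =>
    have h := circleIntegral_div_pow hf hR (hlt i (by omega)) 0
    simp only [Nat.factorial_zero, Nat.cast_one, one_mul, zero_add, pow_one, iteratedDeriv_zero] at h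
    have h2 := hd _ (hnode i (by omega)) 0 hT
    simp only [ddiff, zero_add, Finset.prod_range_one, add_zero, h]
    simp only [iteratedDeriv_zero] at h2
    simp [abs_of_pos Real.pi_pos]
    gcongr
  | succ k ih =>
    by_cases heq : (i + k + 1) / T = i / T
    · have hk : k + 1 < T := by
        by_contra hc
        push Not at hc
        have : i / T + 1 ≤ (i + k + 1) / T := by
          rw [← Nat.add_div_right _ hT]
          exact Nat.div_le_div_right (by omega)
        omega
      have h := circleIntegral_div_pow hf hR (hlt i (by omega)) (k + 1)
      have h2 := hd _ (hnode i (by omega)) (k + 1) hk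
      have e : ddiff f R (fun j => ((j / T : ℕ) : ℂ)) i (k + 1 + 1) =
          ∮ z in C(0, R), f z * ((z - ((i / T : ℕ) : ℂ))⁻¹) ^ (k + 1 + 1) := by
        unfold ddiff
        congr 1
        ext z
        rw [Finset.prod_congr rfl (g := fun _ => (z - ((i / T : ℕ) : ℂ))⁻¹)]
        · simp
        · intro j hj
          have hj := Finset.mem_range.mp hj
          have h1 : i / T ≤ (i + j) / T := Nat.div_le_div_right (by omega)
          have h2 : (i + j) / T ≤ (i + k + 1) / T := Nat.div_le_div_right (by omega)
          have : (i + j) / T = i / T := by omega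
          simp only [this]
      rw [e]
      have h3 := congrArg norm h
      rw [norm_mul, norm_mul, Complex.norm_natCast] at h3
      have h4 : ‖(2:ℂ) * Real.pi * Complex.I‖ = 2 * Real.pi := by simp [abs_of_pos Real.pi_pos]
      rw [h4] at h3
      have hfac : (0:ℝ) < ((k + 1)! : ℝ) := by exact_mod_cast Nat.factorial_pos _
      have hp : (1:ℝ) ≤ (4 * T) ^ (k + 1) := one_le_pow₀ (by linarith)
      rw [← mul_div_assoc, le_div_iff₀ hfac, mul_comm, h3]
      calc 2 * Real.pi * ‖iteratedDeriv (k + 1) f ((i / T : ℕ) : ℂ)‖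
          ≤ 2 * Real.pi * η * 1 := by rw [mul_one]; gcongr
        _ ≤ _ := by gcongr
    · have h := ddiff_succ hf hR (a := fun j => ((j / T : ℕ) : ℂ)) i k
        (fun j hj => hlt j (by omega))
      have i1 := ih (i + 1) (by omega)
      have i2 := ih i (by omega)
      have hle : i / T ≤ (i + k + 1) / T := Nat.div_le_div_right (by omega)
      have hgap : ((k + 1 : ℕ) : ℝ) / (2 * T) ≤ (((i + k + 1) / T : ℕ) : ℝ) - ((i / T : ℕ) : ℝ) := by
        have h1 : i / T + 1 ≤ (i + k + 1) / T := by omega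
        have h2 : i / T + (k + 1) / T ≤ (i + k + 1) / T := by
          rw [add_assoc]; exact Nat.div_add_div_le_add_div
        have h3 : (k + 1) < T * ((k + 1) / T + 1) := Nat.lt_mul_div_succ _ hT
        have h4 : k + 1 ≤ 2 * T * ((i + k + 1) / T - i / T) := by
          have h5 : (k + 1) / T + 1 ≤ 2 * ((i + k + 1) / T - i / T) := by omega
          calc k + 1 ≤ T * ((k + 1) / T + 1) := h3.le
            _ ≤ T * (2 * ((i + k + 1) / T - i / T)) := by gcongr
            _ = _ := by ring
        rw [div_le_iff₀ (by positivity), ← Nat.cast_sub hle]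
        have : ((k + 1 : ℕ) : ℝ) ≤ ((2 * T * ((i + k + 1) / T - i / T) : ℕ) : ℝ) := by
          exact_mod_cast h4
        rw [Nat.cast_mul] at this
        push_cast at this ⊢
        linarith
      have hn : ‖((((i + k + 1) / T : ℕ) : ℂ)) - ((i / T : ℕ) : ℂ)‖ =
          (((i + k + 1) / T : ℕ) : ℝ) - ((i / T : ℕ) : ℝ) := by
        rw [← Nat.cast_sub hle, ← Nat.cast_sub hle, Complex.norm_natCast]
      have h3 := congrArg norm h
      rw [norm_mul, hn] at h3
      have h4 : ‖ddiff f R (fun j => ((j / T : ℕ) : ℂ)) i (k + 2)‖ * (((k + 1 : ℕ) : ℝ) / (2 * T)) ≤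
          2 * (2 * Real.pi * η * ((4 * T) ^ k / k !)) := by
        calc _ ≤ ‖ddiff f R (fun j => ((j / T : ℕ) : ℂ)) i (k + 2)‖ *
              ((((i + k + 1) / T : ℕ) : ℝ) - ((i / T : ℕ) : ℝ)) := by gcongr
          _ ≤ _ := by
            rw [h3]
            refine (norm_sub_le _ _).trans ?_
            linarith
      have hk0 : (0:ℝ) < ((k + 1 : ℕ) : ℝ) := by positivity
      rw [← le_div_iff₀ (by positivity)] at h4
      refine h4.trans (le_of_eq ?_)
      rw [Nat.factorial_succ]
      have : (k ! : ℝ) ≠ 0 := by exact_mod_cast Nat.factorial_ne_zero k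
      push_cast
      field_simp
      ring

/-- An approximate Schwarz lemma: an entire function of moderate size on `|z| = R` whose derivatives
of order `< T` are at most `η` at `0, …, S - 1` is small at every natural number up to `X`. -/
lemma interp_bound {f : ℂ → ℂ} (hf : Differentiable ℂ f) {R X η M : ℝ} {S T x : ℕ} (hT : 0 < T)
    (hSX : (S : ℝ) ≤ X) (hxX : (x : ℝ) ≤ X) (hX : 0 < X) (hXR : 2 * X ≤ R) (hη : 0 ≤ η)
    (hd : ∀ s < S, ∀ k < T, ‖iteratedDeriv k f (s : ℂ)‖ ≤ η)
    (hM : ∀ z : ℂ, ‖z‖ = R → ‖f z‖ ≤ M) :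
    ‖f x‖ ≤ η * Real.exp (4 * T * X) + 2 * (X / (R - X)) ^ (S * T) * M := by
  have hR : 0 < R := by linarith
  have hpi := Real.pi_pos
  have hM0 : 0 ≤ M := (norm_nonneg _).trans (hM (R : ℂ) (by simp [abs_of_pos hR]))
  have hnode : ∀ j < S * T, j / T < S := fun j hj => Nat.div_lt_of_lt_mul (by rwa [mul_comm])
  have hlt : ∀ j < S * T, ((j / T : ℕ) : ℝ) ≤ X := by
    intro j hj
    exact le_trans (by exact_mod_cast (hnode j hj).le) hSX
  have hN := newton_formula hf hR (a := fun j => ((j / T : ℕ) : ℂ)) (x := (x : ℂ))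
    (by rw [Complex.norm_natCast]; linarith) (S * T) (fun j hj => by
      rw [Complex.norm_natCast]; linarith [hlt j hj])
  have hsub : ∀ j < S * T, ‖(x : ℂ) - ((j / T : ℕ) : ℂ)‖ ≤ X := by
    intro j hj
    have : (x : ℂ) - ((j / T : ℕ) : ℂ) = (((x : ℝ) - ((j / T : ℕ) : ℝ) : ℝ) : ℂ) := by push_cast; rfl
    rw [this, Complex.norm_real, Real.norm_eq_abs, abs_le]
    have := hlt j hj
    constructor
    · have : (0:ℝ) ≤ x := by positivity
      linarith
    · have : (0:ℝ) ≤ ((j / T : ℕ) : ℝ) := by positivity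
      linarith
  have hprod : ∀ n ≤ S * T, ‖∏ j ∈ Finset.range n, ((x : ℂ) - ((j / T : ℕ) : ℂ))‖ ≤ X ^ n := by
    intro n hn
    rw [norm_prod]
    refine (Finset.prod_le_prod (fun _ _ => norm_nonneg _) (g := fun _ => X) ?_).trans (by simp)
    intro j hj
    exact hsub j (by have := Finset.mem_range.mp hj; omega)
  have hsum : ‖∑ k ∈ Finset.range (S * T), ddiff f R (fun j => ((j / T : ℕ) : ℂ)) 0 (k + 1) *
      ∏ j ∈ Finset.range k, ((x : ℂ) - ((j / T : ℕ) : ℂ))‖ ≤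
      2 * Real.pi * η * Real.exp (4 * T * X) := by
    calc _ ≤ ∑ k ∈ Finset.range (S * T), 2 * Real.pi * η * ((4 * T * X) ^ k / k !) := by
          refine norm_sum_le_of_le _ fun k hk => ?_
          have hk := Finset.mem_range.mp hk
          rw [norm_mul]
          have h1 := ddiff_bound hf hT hR (by linarith) hη hd k 0 (by omega)
          have h2 := hprod k hk.le
          calc _ ≤ (2 * Real.pi * η * ((4 * T) ^ k / k !)) * X ^ k := by gcongr
            _ = _ := by rw [mul_pow (4 * (T:ℝ)) X]; ring
      _ = 2 * Real.pi * η * ∑ k ∈ Finset.range (S * T), ((4 * T * X) ^ k / k !) := by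
          rw [Finset.mul_sum]
      _ ≤ _ := by
          gcongr
          exact Real.sum_le_exp_of_nonneg (by positivity) _
  have hint : ‖∮ z in C(0, R), f z * (∏ j ∈ Finset.range (S * T), (z - ((j / T : ℕ) : ℂ))⁻¹) *
      (z - (x : ℂ))⁻¹‖ ≤ 2 * Real.pi * R * (M * ((R - X)⁻¹) ^ (S * T) * (R - X)⁻¹) := by
    apply circleIntegral.norm_integral_le_of_norm_le_const hR.le
    intro z hz
    have hz : ‖z‖ = R := by simpa using hz
    have key : ∀ y : ℝ, 0 ≤ y → y ≤ X → ∀ w : ℂ, ‖w‖ = y → ‖(z - w)⁻¹‖ ≤ (R - X)⁻¹ := by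
      intro y _ hy w hw
      rw [norm_inv]
      have := norm_sub_norm_le z w
      gcongr
      · linarith
      · linarith
    rw [norm_mul, norm_mul, norm_prod]
    have hRX : 0 < R - X := by linarith
    have p1 : ∏ j ∈ Finset.range (S * T), ‖(z - ((j / T : ℕ) : ℂ))⁻¹‖ ≤ ((R - X)⁻¹) ^ (S * T) := by
      refine (Finset.prod_le_prod (fun _ _ => norm_nonneg _) (g := fun _ => (R - X)⁻¹) ?_).trans
        (by simp)
      intro j hj
      exact key _ (by positivity) (hlt j (Finset.mem_range.mp hj)) _ (Complex.norm_natCast _)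
    have p2 := key x (by positivity) hxX x (Complex.norm_natCast _)
    have p3 := hM z hz
    gcongr
  have hfin := congrArg norm hN
  rw [norm_mul, show ‖(2:ℂ) * Real.pi * Complex.I‖ = 2 * Real.pi by simp [abs_of_pos hpi]] at hfin
  have hRX : 0 < R - X := by linarith
  have hle : 2 * Real.pi * ‖f x‖ ≤ 2 * Real.pi * η * Real.exp (4 * T * X) +
      X ^ (S * T) * (2 * Real.pi * R * (M * ((R - X)⁻¹) ^ (S * T) * (R - X)⁻¹)) := by
    rw [hfin]
    refine (norm_add_le _ _).trans (add_le_add hsum ?_)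
    rw [norm_mul]
    have := hprod (S * T) le_rfl
    gcongr
  have hR2 : R * (R - X)⁻¹ ≤ 2 := by
    rw [← div_eq_mul_inv, div_le_iff₀ hRX]; linarith
  have : X ^ (S * T) * (2 * Real.pi * R * (M * ((R - X)⁻¹) ^ (S * T) * (R - X)⁻¹)) =
      2 * Real.pi * ((R * (R - X)⁻¹) * (X / (R - X)) ^ (S * T) * M) := by
    rw [div_pow, inv_pow]; field_simp
  rw [this] at hle
  have h5 : (R * (R - X)⁻¹) * (X / (R - X)) ^ (S * T) * M ≤ 2 * (X / (R - X)) ^ (S * T) * M := by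
    gcongr
  nlinarith [Real.pi_pos]

/-! ### Fel'dman polynomials -/

open Polynomial in
/-- The binomial polynomial `X(X-1)⋯(X-i+1)/i!`. -/
noncomputable def binomP (i : ℕ) : ℂ[X] :=
  ∏ r ∈ Finset.range i, C (((r : ℂ) + 1)⁻¹) * (X - C (r : ℂ))

/-- The Fel'dman polynomial of degree `n`: a product of `n / h` copies of `binom(X, h)` and one
`binom(X, n % h)`. Keeping the degree of each binomial factor at most `h` bounds the denominators
of the derivatives in terms of `lcm(1, …, h)`. -/
noncomputable def blockP (h n : ℕ) : Polynomial ℂ :=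
  binomP (n % h) * binomP h ^ (n / h)

section poly
open Polynomial

lemma degree_binomP (i : ℕ) : (binomP i).degree = i := by
  unfold binomP
  rw [degree_prod, Finset.sum_congr rfl (g := fun _ => (1 : WithBot ℕ))]
  · simp
  · intro r _
    have : ((r : ℂ) + 1)⁻¹ ≠ 0 := inv_ne_zero (by exact_mod_cast Nat.succ_ne_zero r)
    rw [degree_mul, degree_C this, degree_X_sub_C, zero_add]

lemma degree_blockP (h n : ℕ) : (blockP h n).degree = n := by
  unfold blockP
  rw [degree_mul, degree_pow, degree_binomP, degree_binomP]
  rw [nsmul_eq_mul, mul_comm]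
  exact_mod_cast congrArg (Nat.cast (R := WithBot ℕ)) (Nat.mod_add_div n h)

/-- Complex polynomials with coefficients in `ℤ`. -/
noncomputable def intPoly : Subring ℂ[X] := (mapRingHom (Int.castRingHom ℂ)).range

lemma C_int_mem (n : ℤ) : C (n : ℂ) ∈ intPoly := ⟨C n, by simp⟩

lemma X_mem : (X : ℂ[X]) ∈ intPoly := ⟨X, by simp⟩

lemma coeff_intPoly {P : ℂ[X]} (hP : P ∈ intPoly) (m : ℕ) : ∃ k : ℤ, P.coeff m = k := by
  obtain ⟨Q, rfl⟩ := hP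
  exact ⟨Q.coeff m, by simp⟩

/-- Pascal's rule. -/
lemma binomP_pascal (i : ℕ) :
    (binomP (i + 1)).comp (X + 1) = binomP (i + 1) + binomP i := by
  induction i with
  | zero => simp [binomP]
  | succ i ih =>
    have e1 : binomP (i + 2) = binomP (i + 1) * (C (((i : ℂ) + 1 + 1)⁻¹) * (X - C ((i : ℂ) + 1))) := by
      unfold binomP
      rw [Finset.prod_range_succ _ (i + 1)]
      push_cast; rfl
    have e2 : binomP (i + 1) = binomP i * (C (((i : ℂ) + 1)⁻¹) * (X - C (i : ℂ))) := by
      unfold binomP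
      rw [Finset.prod_range_succ _ i]
    have hi : ((i : ℂ) + 1) ≠ 0 := by exact_mod_cast Nat.succ_ne_zero i
    have hi2 : ((i : ℂ) + 1 + 1) ≠ 0 := by exact_mod_cast Nat.succ_ne_zero (i + 1)
    have e3 : C ((i : ℂ) + 1) * binomP (i + 1) = binomP i * (X - C (i : ℂ)) := by
      rw [e2]
      calc _ = C (((i : ℂ) + 1) * ((i : ℂ) + 1)⁻¹) * (binomP i * (X - C (i : ℂ))) := by
            rw [C_mul]; ring
        _ = _ := by rw [mul_inv_cancel₀ hi]; simp
    have e4 : C ((i : ℂ) + 1 + 1) * C (((i : ℂ) + 1 + 1)⁻¹) = 1 := by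
      rw [← C_mul, mul_inv_cancel₀ hi2, C_1]
    rw [e1, mul_comp, ih]
    simp only [mul_comp, C_comp, sub_comp, X_comp]
    have e5 : (X + 1 - C ((i : ℂ) + 1)) = X - C (i : ℂ) := by simp
    rw [e5]
    have e6 : (binomP (i + 1) + binomP i) * (X - C (i : ℂ)) =
        binomP (i + 1) * (X - C ((i : ℂ) + 1)) + binomP (i + 1) * C ((i : ℂ) + 1 + 1) := by
      rw [add_mul, ← e3]; simp; ring
    calc _ = C (((i : ℂ) + 1 + 1)⁻¹) * ((binomP (i + 1) + binomP i) * (X - C (i : ℂ))) := by ring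
      _ = binomP (i + 1) * (C (((i : ℂ) + 1 + 1)⁻¹) * (X - C ((i : ℂ) + 1))) +
          binomP (i + 1) * (C ((i : ℂ) + 1 + 1) * C (((i : ℂ) + 1 + 1)⁻¹)) := by rw [e6]; ring
      _ = _ := by rw [e4, mul_one]

/-- If `d` is divisible by `1, …, h` then `binom(s + dX, i)` has integral coefficients. For `s = 0`
this holds factor by factor, and Pascal's rule increases `s`. -/
lemma binomP_comp_mem {h d : ℕ} (hd : ∀ k, 1 ≤ k → k ≤ h → k ∣ d) (s i : ℕ) (hi : i ≤ h) :
    (binomP i).comp (C (d : ℂ) * X + C (s : ℂ)) ∈ intPoly := by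
  induction s generalizing i with
  | zero =>
    cases i with
    | zero => simp [binomP, one_mem]
    | succ k =>
      have e : (binomP (k + 1)).comp (C (d : ℂ) * X + C ((0 : ℕ) : ℂ)) =
          (∏ r ∈ Finset.range k, (C ((d : ℂ) / ((r : ℂ) + 1)) * X - 1)) *
            (C ((d : ℂ) / ((k : ℂ) + 1)) * X) := by
        unfold binomP
        rw [Finset.prod_mul_distrib, Finset.prod_range_succ' (fun r => X - C (r : ℂ)),
          Finset.prod_range_succ (fun r => C (((r : ℂ) + 1)⁻¹))]
        have : ∏ r ∈ Finset.range k, (C ((d : ℂ) / ((r : ℂ) + 1)) * X - 1) =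
            (∏ r ∈ Finset.range k, C (((r : ℂ) + 1)⁻¹)) *
              ∏ r ∈ Finset.range k, (C (d : ℂ) * X - C ((r : ℂ) + 1)) := by
          rw [← Finset.prod_mul_distrib]
          refine Finset.prod_congr rfl fun r _ => ?_
          have hr : ((r : ℂ) + 1) ≠ 0 := by exact_mod_cast Nat.succ_ne_zero r
          rw [mul_sub, ← C_mul, inv_mul_cancel₀ hr, div_eq_mul_inv, C_mul, C_1]
          ring
        rw [this]
        simp only [mul_comp, prod_comp, C_comp, sub_comp, X_comp]
        rw [div_eq_mul_inv, C_mul]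
        simp
        ring
      rw [e]
      have hdiv : ∀ r, r + 1 ≤ h → C ((d : ℂ) / ((r : ℂ) + 1)) ∈ intPoly := by
        intro r hr
        obtain ⟨c, hc⟩ := hd (r + 1) (by omega) hr
        have hr0 : ((r : ℂ) + 1) ≠ 0 := by exact_mod_cast Nat.succ_ne_zero r
        have : (d : ℂ) / ((r : ℂ) + 1) = ((c : ℤ) : ℂ) := by
          rw [hc]; push_cast; field_simp
        rw [this]
        exact C_int_mem _
      refine mul_mem (prod_mem fun r hr => sub_mem (mul_mem (hdiv r ?_) X_mem) (one_mem _))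
        (mul_mem (hdiv k hi) X_mem)
      have := Finset.mem_range.mp hr
      omega
  | succ s ih =>
    cases i with
    | zero => simp [binomP, one_mem]
    | succ k =>
      have e : (binomP (k + 1)).comp (C (d : ℂ) * X + C ((s + 1 : ℕ) : ℂ)) =
          ((binomP (k + 1)).comp (X + 1)).comp (C (d : ℂ) * X + C (s : ℂ)) := by
        rw [comp_assoc]
        congr 1
        simp
        ring
      rw [e, binomP_pascal, add_comp]
      exact add_mem (ih _ hi) (ih _ (by omega))

lemma blockP_comp_mem {h d : ℕ} (hh : 0 < h) (hd : ∀ k, 1 ≤ k → k ≤ h → k ∣ d) (s n : ℕ) :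
    (blockP h n).comp (C (d : ℂ) * X + C (s : ℂ)) ∈ intPoly := by
  unfold blockP
  rw [mul_comp, pow_comp]
  exact mul_mem (binomP_comp_mem hd s _ (Nat.mod_lt _ hh).le)
    (pow_mem (binomP_comp_mem hd s h le_rfl) _)

/-- The `m`-th derivative of a Fel'dman polynomial takes at natural numbers values with denominator
dividing `d ^ m`, since `blockP h n (s + dX)` has integral coefficients. -/
lemma blockP_deriv_int {h d : ℕ} (hh : 0 < h) (hd : ∀ k, 1 ≤ k → k ≤ h → k ∣ d) (s n m : ℕ) :
    ∃ k : ℤ, (d : ℂ) ^ m * (derivative^[m] (blockP h n)).eval (s : ℂ) = k := by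
  obtain ⟨k, hk⟩ := coeff_intPoly (blockP_comp_mem hh hd s n) m
  have e : (blockP h n).comp (C (d : ℂ) * X + C (s : ℂ)) =
      (taylor (s : ℂ) (blockP h n)).comp (C (d : ℂ) * X) := by
    rw [taylor_apply, comp_assoc]; simp
  rw [e, comp_C_mul_X_coeff, taylor_coeff] at hk
  refine ⟨m ! * k, ?_⟩
  rw [← factorial_smul_hasseDeriv]
  push_cast
  rw [← hk]
  simp
  ring

lemma iteratedDeriv_eval (P : ℂ[X]) (m : ℕ) (z : ℂ) :
    iteratedDeriv m (fun w => P.eval w) z = (derivative^[m] P).eval z := by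
  induction m generalizing P with
  | zero => simp
  | succ m ih =>
    rw [iteratedDeriv_succ', Function.iterate_succ_apply, ← ih]
    congr 1
    ext w
    simp

lemma binomP_bound {h i : ℕ} (hh : 0 < h) (hi : i ≤ h) {Y : ℝ} (hY : (h : ℝ) ≤ Y) {w : ℂ}
    (hw : ‖w‖ ≤ Y) : ‖(binomP i).eval w‖ ≤ (2 * Y / h) ^ h * Real.exp h := by
  have hh0 : (0:ℝ) < h := by exact_mod_cast hh
  have h1 : ‖(binomP i).eval w‖ ≤ (2 * Y) ^ i / i ! := by
    unfold binomP
    rw [eval_prod, norm_prod, ← Finset.prod_range_add_one_eq_factorial]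
    push_cast
    have : (2 * Y) ^ i = ∏ r ∈ Finset.range i, (2 * Y) := by simp
    rw [this, ← Finset.prod_div_distrib]
    refine Finset.prod_le_prod (fun _ _ => norm_nonneg _) fun r hr => ?_
    have hr := Finset.mem_range.mp hr
    simp only [eval_mul, eval_C, eval_sub, eval_X, norm_mul, norm_inv]
    have e : ‖(r : ℂ) + 1‖ = (r : ℝ) + 1 := by
      have := Complex.norm_natCast (r + 1)
      push_cast at this
      exact this
    rw [e, div_eq_inv_mul]
    gcongr
    refine (norm_sub_le _ _).trans ?_
    rw [Complex.norm_natCast]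
    have : (r : ℝ) ≤ h := by exact_mod_cast (by omega : r ≤ h)
    linarith
  refine h1.trans ?_
  have h2 : 1 ≤ 2 * Y / h := by rw [le_div_iff₀ hh0]; linarith
  have h3 : (2 * Y) ^ i / i ! = (2 * Y / h) ^ i * ((h : ℝ) ^ i / i !) := by
    rw [div_pow]; field_simp
  rw [h3]
  have h4 := Real.pow_div_factorial_le_exp (h : ℝ) hh0.le i
  have h5 : (2 * Y / h) ^ i ≤ (2 * Y / h) ^ h := pow_le_pow_right₀ h2 hi
  gcongr

/-- Size of the derivatives of Fel'dman polynomials, from the size of the polynomials by Cauchy's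
inequality on a circle of radius `1`. -/
lemma blockP_bound {h n J : ℕ} (hh : 0 < h) (hn : n < h * J) {Y : ℝ} (hY : (h : ℝ) ≤ Y) {z : ℂ}
    (hz : ‖z‖ + 1 ≤ Y) (m : ℕ) :
    ‖(derivative^[m] (blockP h n)).eval z‖ ≤ m ! * ((2 * Y / h) ^ h * Real.exp h) ^ J := by
  have hh0 : (0:ℝ) < h := by exact_mod_cast hh
  have h2 : 1 ≤ 2 * Y / h := by rw [le_div_iff₀ hh0]; linarith
  have h3 : 1 ≤ (2 * Y / h) ^ h * Real.exp h :=
    one_le_mul_of_one_le_of_one_le (one_le_pow₀ h2) (Real.one_le_exp hh0.le)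
  rw [← iteratedDeriv_eval]
  have := Complex.norm_iteratedDeriv_le_of_forall_mem_sphere_norm_le (c := z) (R := 1)
    (C := ((2 * Y / h) ^ h * Real.exp h) ^ J) (f := fun w => (blockP h n).eval w) m one_pos
    (Polynomial.differentiable _).diffContOnCl (by
      intro w hw
      have hw : ‖w‖ ≤ Y := by
        have h1 : ‖w - z‖ = 1 := by simpa [dist_eq_norm] using hw
        have h2 : ‖w‖ ≤ ‖w - z‖ + ‖z‖ := by simpa using norm_add_le (w - z) z
        linarith
      have hJ : n / h + 1 ≤ J := Nat.div_lt_of_lt_mul hn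
      unfold blockP
      rw [eval_mul, eval_pow, norm_mul, norm_pow]
      have b1 := binomP_bound hh (Nat.mod_lt n hh).le hY hw
      have b2 := binomP_bound hh le_rfl hY hw
      calc _ ≤ ((2 * Y / h) ^ h * Real.exp h) * ((2 * Y / h) ^ h * Real.exp h) ^ (n / h) := by
            gcongr
        _ = ((2 * Y / h) ^ h * Real.exp h) ^ (n / h + 1) := by ring
        _ ≤ _ := pow_le_pow_right₀ h3 hJ)
  simpa using this

lemma blockP_lin_indep (h D : ℕ) (c : Fin D → ℂ)
    (h0 : ∑ n, C (c n) * blockP h n = 0) : c = 0 := by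
  let Q : Polynomial.Sequence ℂ := ⟨blockP h, degree_blockP h⟩
  have := Q.linearIndependent.comp (fun n : Fin D => (n : ℕ)) Fin.val_injective
  rw [Fintype.linearIndependent_iff] at this
  ext n
  refine this c ?_ n
  rw [← h0]
  refine Finset.sum_congr rfl fun n _ => ?_
  rw [smul_eq_C_mul]
  rfl

/-! ### Zero estimate -/

/-- An exponential polynomial `∑ P i (s) (x i) ^ s` with distinct nonzero `x i` and `deg P i < d i`
which vanishes at `∑ d i` consecutive integers is identically zero. The operator
`u ↦ u(s + 1) - x i * u(s)` lowers both the degree of `P i` and the number of known zeros by one. -/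
lemma exp_poly_zero {ι : Type*} [Fintype ι] [DecidableEq ι] {x : ι → ℂ}
    (hx : Function.Injective x) (hx0 : ∀ i, x i ≠ 0) (N : ℕ) (P : ι → ℂ[X]) (d : ι → ℕ)
    (hN : ∑ i, d i = N) (hP : ∀ i, (P i).degree < d i)
    (hv : ∀ s < N, ∑ i, (P i).eval (s : ℂ) * x i ^ s = 0) : ∀ i, P i = 0 := by
  induction N generalizing P d with
  | zero =>
    intro i
    have : d i = 0 := by
      have := Finset.single_le_sum (f := d) (fun _ _ => Nat.zero_le _) (Finset.mem_univ i)
      omega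
    have h := hP i
    rw [this] at h
    simpa [Nat.WithBot.lt_zero_iff] using h
  | succ N ih =>
    obtain ⟨i, hi⟩ : ∃ i, 0 < d i := by
      by_contra hc
      push Not at hc
      have : ∑ i, d i = 0 := Finset.sum_eq_zero fun i _ => by have := hc i; omega
      omega
    -- The `j`-th coefficient of `u(s + 1) - x i * u(s)` is `x j * P j (s + 1) - x i * P j (s)`.
    have key : ∀ j, C (x j) * (P j).comp (X + 1) - C (x i) * P j = 0 := by
      refine ih (fun j => C (x j) * (P j).comp (X + 1) - C (x i) * P j)
        (Function.update d i (d i - 1)) ?_ ?_ ?_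
      · rw [Finset.sum_update_of_mem (Finset.mem_univ i)]
        have := Finset.add_sum_erase Finset.univ d (Finset.mem_univ i)
        rw [Finset.sdiff_singleton_eq_erase]
        omega
      · intro j
        have hc : ((P j).comp (X + 1)).degree = (P j).degree := by
          have := degree_taylor (P j) 1
          rwa [taylor_apply, C_1] at this
        by_cases hj : j = i
        · subst hj
          rw [Function.update_self, ← mul_sub, degree_mul, degree_C (hx0 j), zero_add]
          by_cases h0 : P j = 0
          · simp [h0]
          have hl : ((P j).comp (X + 1)).leadingCoeff = (P j).leadingCoeff := by
            have : (taylor 1 (P j)).leadingCoeff = (P j).leadingCoeff := leadingCoeff_taylor ..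
            rwa [taylor_apply, C_1] at this
          have hne : (P j).comp (X + 1) ≠ 0 := by
            intro h
            rw [h, degree_zero] at hc
            exact h0 (degree_eq_bot.mp hc.symm)
          have h1 := degree_sub_lt_left hc hne hl
          rw [hc] at h1
          have h2 := hP j
          rw [degree_eq_natDegree h0] at h1 h2
          refine lt_of_lt_of_le h1 ?_
          norm_cast at h2 ⊢
          omega
        · rw [Function.update_of_ne hj]
          refine lt_of_le_of_lt (degree_sub_le _ _) (max_lt ?_ ?_)
          · rw [degree_mul, degree_C (hx0 j), zero_add, hc]; exact hP j
          · rw [degree_mul, degree_C (hx0 i), zero_add]; exact hP j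
      · intro s hs
        have h1 := hv (s + 1) (by omega)
        have h2 := hv s (by omega)
        calc _ = ∑ j, (P j).eval ((s + 1 : ℕ) : ℂ) * x j ^ (s + 1) -
              x i * ∑ j, (P j).eval (s : ℂ) * x j ^ s := by
              rw [Finset.mul_sum, ← Finset.sum_sub_distrib]
              refine Finset.sum_congr rfl fun j _ => ?_
              simp
              ring
          _ = 0 := by rw [h1, h2]; simp
    have hne : ∀ j, j ≠ i → P j = 0 := by
      intro j hj
      by_contra h0
      have h1 := congrArg (fun Q => Q.coeff (P j).natDegree) (key j)
      have hl : ((P j).comp (X + 1)).coeff (P j).natDegree = (P j).leadingCoeff := by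
        have := coeff_taylor_natDegree (f := P j) (r := 1)
        rwa [taylor_apply, C_1] at this
      simp only [coeff_sub, coeff_C_mul, hl, coeff_zero] at h1
      change x j * (P j).leadingCoeff - x i * (P j).leadingCoeff = 0 at h1
      rw [← sub_mul, _root_.mul_eq_zero, sub_eq_zero] at h1
      rcases h1 with h1 | h1
      · exact hj (hx h1)
      · exact h0 (leadingCoeff_eq_zero.mp h1)
    intro j
    by_cases hj : j = i
    · subst hj
      have h1 := key j
      rw [← mul_sub, _root_.mul_eq_zero] at h1
      have h2 : (P j).comp (X + 1) = P j := by
        rcases h1 with h1 | h1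
        · exact absurd (C_eq_zero.mp h1) (hx0 j)
        · exact sub_eq_zero.mp h1
      have h3 : (P j).eval 0 = 0 := by
        have := hv 0 (by omega)
        rw [Finset.sum_eq_single j] at this
        · simpa using this
        · intro k _ hk; rw [hne k hk]; simp
        · simp
      have h4 : ∀ s : ℕ, (P j).eval (s : ℂ) = 0 := by
        intro s
        induction s with
        | zero => simpa using h3
        | succ s ihs =>
          have := congrArg (fun Q => Q.eval (s : ℂ)) h2
          simp at this
          push_cast
          rw [this, ihs]
      refine eq_zero_of_infinite_isRoot _ ?_
      refine Set.Infinite.mono ?_ (Set.infinite_range_of_injective (Nat.cast_injective (R := ℂ)))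
      rintro _ ⟨s, rfl⟩
      exact h4 s
    · exact hne j hj
end poly


section aux
open Polynomial

/-! ### The auxiliary function -/

/-- Index set of the unknown coefficients: the degree `n` of the Fel'dman polynomial and the
exponents `l₁, l₂` of `p` and `q`. -/
abbrev Idx (D L : ℕ) := Fin D × Fin L × Fin L

/-- The linear form `l₁ + l₂ ρ`. -/
def linF {D L : ℕ} (ρ : ℝ) (u : Idx D L) : ℝ := (u.2.1 : ℕ) + (u.2.2 : ℕ) * ρ

/-- The auxiliary exponential polynomial
`∑ c(n, l₁, l₂) Δₙ^(m₀)(z) (l₁ + l₂ ρ) ^ m₁ exp(κ (l₁ + l₂ lam) z)`, where `κ = log p` and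
`lam = log q / log p` in the application. The ratio `lam` in the exponential and the ratio `ρ` in
the power are separate parameters: `ρ = lam` gives a family closed under differentiation, `ρ = a / b`
gives rational values at natural numbers. -/
noncomputable def auxF {D L : ℕ} (κ lam ρ : ℝ) (h : ℕ) (c : Idx D L → ℤ) (m₀ m₁ : ℕ) (z : ℂ) : ℂ :=
  ∑ u : Idx D L, (c u : ℂ) * (derivative^[m₀] (blockP h u.1)).eval z * (linF ρ u : ℂ) ^ m₁ *
    Complex.exp ((κ * linF lam u : ℝ) * z)

variable {D L : ℕ}

/-- For `ρ = lam`, differentiation raises either `m₀` or `m₁` by one. -/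
lemma hasDerivAt_auxF (κ lam : ℝ) (h : ℕ) (c : Idx D L → ℤ) (m₀ m₁ : ℕ) (z : ℂ) :
    HasDerivAt (auxF κ lam lam h c m₀ m₁)
      (auxF κ lam lam h c (m₀ + 1) m₁ z + κ * auxF κ lam lam h c m₀ (m₁ + 1) z) z := by
  unfold auxF
  rw [Finset.mul_sum, ← Finset.sum_add_distrib]
  refine HasDerivAt.fun_sum fun u _ => ?_
  have h1 := (derivative^[m₀] (blockP h u.1)).hasDerivAt z
  have h2 : HasDerivAt (fun z : ℂ => Complex.exp ((κ * linF lam u : ℝ) * z))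
      (Complex.exp ((κ * linF lam u : ℝ) * z) * ((κ * linF lam u : ℝ) * 1)) z :=
    ((hasDerivAt_id z).const_mul _).cexp
  refine (((h1.const_mul (c u : ℂ)).mul_const ((linF lam u : ℂ) ^ m₁)).mul h2).congr_deriv ?_
  rw [Function.iterate_succ_apply']
  push_cast
  ring

lemma differentiable_auxF (κ lam : ℝ) (h : ℕ) (c : Idx D L → ℤ) (m₀ m₁ : ℕ) :
    Differentiable ℂ (auxF κ lam lam h c m₀ m₁) :=
  fun z => (hasDerivAt_auxF κ lam h c m₀ m₁ z).differentiableAt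

lemma iteratedDeriv_auxF_le {κ lam : ℝ} {h : ℕ} {c : Idx D L → ℤ} {T : ℕ} {η : ℝ} {z : ℂ}
    (hη : ∀ m₀ m₁, m₀ + m₁ < T → ‖auxF κ lam lam h c m₀ m₁ z‖ ≤ η) :
    ∀ k m₀ m₁, m₀ + m₁ + k < T →
      ‖iteratedDeriv k (auxF κ lam lam h c m₀ m₁) z‖ ≤ (1 + |κ|) ^ k * η := by
  intro k
  induction k with
  | zero => intro m₀ m₁ hm; simpa using hη m₀ m₁ hm
  | succ k ih =>
    intro m₀ m₁ hm
    have hd : deriv (auxF κ lam lam h c m₀ m₁) =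
        auxF κ lam lam h c (m₀ + 1) m₁ + (κ : ℂ) • auxF κ lam lam h c m₀ (m₁ + 1) := by
      ext w
      rw [(hasDerivAt_auxF κ lam h c m₀ m₁ w).deriv]
      simp
    have hc : ∀ m₀ m₁, ContDiffAt ℂ k (auxF κ lam lam h c m₀ m₁) z := fun m₀ m₁ =>
      (differentiable_auxF κ lam h c m₀ m₁).contDiff.contDiffAt
    have hc' : ContDiffAt ℂ k ((κ : ℂ) • auxF κ lam lam h c m₀ (m₁ + 1)) z :=
      contDiffAt_const.smul (hc _ _)
    rw [iteratedDeriv_succ', hd, iteratedDeriv_add (hc _ _) hc',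
      iteratedDeriv_const_smul_field]
    refine (norm_add_le _ _).trans ?_
    have h1 := ih (m₀ + 1) m₁ (by omega)
    have h2 := ih m₀ (m₁ + 1) (by omega)
    rw [norm_smul, Complex.norm_real, Real.norm_eq_abs]
    calc _ ≤ (1 + |κ|) ^ k * η + |κ| * ((1 + |κ|) ^ k * η) := by gcongr
      _ = _ := by ring

lemma norm_auxF_le {κ lam ρ : ℝ} {h : ℕ} {c : Idx D L → ℤ} {m₀ m₁ : ℕ} {z : ℂ} {Cc Bp W Ex : ℝ}
    (hc : ∀ u, |(c u : ℝ)| ≤ Cc) (hP : ∀ n < D, ‖(derivative^[m₀] (blockP h n)).eval z‖ ≤ Bp)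
    (hW : ∀ u : Idx D L, |linF ρ u| ≤ W)
    (hE : ∀ u : Idx D L, ‖Complex.exp ((κ * linF lam u : ℝ) * z)‖ ≤ Ex) :
    ‖auxF κ lam ρ h c m₀ m₁ z‖ ≤ (D * L ^ 2 : ℕ) * (Cc * Bp * W ^ m₁ * Ex) := by
  unfold auxF
  refine (norm_sum_le _ _).trans ?_
  have : ∀ u ∈ (Finset.univ : Finset (Idx D L)), ‖(c u : ℂ) *
      (derivative^[m₀] (blockP h u.1)).eval z * (linF ρ u : ℂ) ^ m₁ *
      Complex.exp ((κ * linF lam u : ℝ) * z)‖ ≤ Cc * Bp * W ^ m₁ * Ex := by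
    intro u _
    have h1 := hc u
    have h2 := hP u.1 u.1.2
    have h3 := hW u
    have h4 := hE u
    have h5 : ‖(c u : ℂ)‖ = |(c u : ℝ)| := by
      rw [← Complex.ofReal_intCast, Complex.norm_real, Real.norm_eq_abs]
    rw [norm_mul, norm_mul, norm_mul, norm_pow, Complex.norm_real, Real.norm_eq_abs, h5]
    have p1 : 0 ≤ Cc := (abs_nonneg _).trans h1
    have p2 : 0 ≤ Bp := (norm_nonneg _).trans h2
    have p3 : 0 ≤ W := (abs_nonneg _).trans h3
    gcongr
  refine (Finset.sum_le_card_nsmul _ _ _ this).trans (le_of_eq ?_)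
  simp [nsmul_eq_mul, sq]

lemma linF_pow_sub_le {lam ρ W : ℝ} {u : Idx D L} (hLW : (L : ℝ) ≤ W)
    (h1 : |linF lam u| ≤ W) (h2 : |linF ρ u| ≤ W) (m : ℕ) :
    |linF lam u ^ m - linF ρ u ^ m| ≤ m * W ^ m * |lam - ρ| := by
  refine (abs_pow_sub_pow_le _ _ _).trans ?_
  rcases Nat.eq_zero_or_pos m with rfl | hm
  · simp
  have h3 : linF lam u - linF ρ u = (u.2.2 : ℕ) * (lam - ρ) := by unfold linF; ring
  have hW : 0 ≤ W := (abs_nonneg _).trans h1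
  have h4 : |linF lam u - linF ρ u| ≤ W * |lam - ρ| := by
    rw [h3, abs_mul, Nat.abs_cast]
    gcongr
    exact le_trans (by exact_mod_cast u.2.2.2.le) hLW
  calc _ ≤ W * |lam - ρ| * m * W ^ (m - 1) := by
        gcongr
        exact max_le h1 h2
    _ = m * (W ^ (m - 1) * W) * |lam - ρ| := by ring
    _ = _ := by rw [← pow_succ, Nat.sub_add_cancel hm]

/-- Replacing `lam` by `ρ` in the power factor costs at most a factor times `|lam - ρ|`. -/
lemma norm_auxF_sub_le {κ lam ρ : ℝ} {h : ℕ} {c : Idx D L → ℤ} {m₀ m₁ : ℕ} {z : ℂ}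
    {Cc Bp W Ex : ℝ}
    (hc : ∀ u, |(c u : ℝ)| ≤ Cc) (hP : ∀ n < D, ‖(derivative^[m₀] (blockP h n)).eval z‖ ≤ Bp)
    (hLW : (L : ℝ) ≤ W)
    (hW : ∀ u : Idx D L, |linF lam u| ≤ W) (hW' : ∀ u : Idx D L, |linF ρ u| ≤ W)
    (hE : ∀ u : Idx D L, ‖Complex.exp ((κ * linF lam u : ℝ) * z)‖ ≤ Ex) :
    ‖auxF κ lam lam h c m₀ m₁ z - auxF κ lam ρ h c m₀ m₁ z‖ ≤
      (D * L ^ 2 : ℕ) * (Cc * Bp * (m₁ * W ^ m₁ * |lam - ρ|) * Ex) := by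
  unfold auxF
  rw [← Finset.sum_sub_distrib]
  refine (norm_sum_le _ _).trans ?_
  have : ∀ u ∈ (Finset.univ : Finset (Idx D L)), ‖(c u : ℂ) *
      (derivative^[m₀] (blockP h u.1)).eval z * (linF lam u : ℂ) ^ m₁ *
      Complex.exp ((κ * linF lam u : ℝ) * z) - (c u : ℂ) *
      (derivative^[m₀] (blockP h u.1)).eval z * (linF ρ u : ℂ) ^ m₁ *
      Complex.exp ((κ * linF lam u : ℝ) * z)‖ ≤ Cc * Bp * (m₁ * W ^ m₁ * |lam - ρ|) * Ex := by
    intro u _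
    have h1 := hc u
    have h2 := hP u.1 u.1.2
    have h3 := linF_pow_sub_le hLW (hW u) (hW' u) m₁
    have h4 := hE u
    have h5 : ‖(c u : ℂ)‖ = |(c u : ℝ)| := by
      rw [← Complex.ofReal_intCast, Complex.norm_real, Real.norm_eq_abs]
    have h6 : ‖(linF lam u : ℂ) ^ m₁ - (linF ρ u : ℂ) ^ m₁‖ = |linF lam u ^ m₁ - linF ρ u ^ m₁| := by
      rw [← Complex.ofReal_pow, ← Complex.ofReal_pow, ← Complex.ofReal_sub, Complex.norm_real,
        Real.norm_eq_abs]
    rw [← sub_mul, ← mul_sub, norm_mul, norm_mul, norm_mul, h6, h5]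
    have p1 : 0 ≤ Cc := (abs_nonneg _).trans h1
    have p2 : 0 ≤ Bp := (norm_nonneg _).trans h2
    have p3 := (abs_nonneg _).trans h3
    gcongr
  refine (Finset.sum_le_card_nsmul _ _ _ this).trans (le_of_eq ?_)
  simp [nsmul_eq_mul, sq]

lemma exp_linF {p q : ℕ} (hp : 1 < p) (hq : 1 < q) (u : Idx D L) :
    Real.exp (Real.log p * linF (Real.log q / Real.log p) u) =
      (p : ℝ) ^ (u.2.1 : ℕ) * (q : ℝ) ^ (u.2.2 : ℕ) := by
  have hp0 : (0:ℝ) < p := by exact_mod_cast (by omega : 0 < p)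
  have hq0 : (0:ℝ) < q := by exact_mod_cast (by omega : 0 < q)
  have hlp : Real.log p ≠ 0 := (Real.log_pos (by exact_mod_cast hp)).ne'
  have : Real.log p * linF (Real.log q / Real.log p) u =
      (u.2.1 : ℕ) * Real.log p + (u.2.2 : ℕ) * Real.log q := by
    unfold linF; field_simp
  rw [this, Real.exp_add, Real.exp_nat_mul, Real.exp_nat_mul, Real.exp_log hp0, Real.exp_log hq0]

lemma cexp_linF {p q : ℕ} (hp : 1 < p) (hq : 1 < q) (u : Idx D L) (s : ℕ) :
    Complex.exp ((Real.log p * linF (Real.log q / Real.log p) u : ℝ) * (s : ℂ)) =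
      ((p : ℂ) ^ (u.2.1 : ℕ) * (q : ℂ) ^ (u.2.2 : ℕ)) ^ s := by
  rw [mul_comm, Complex.exp_nat_mul, ← Complex.ofReal_exp, exp_linF hp hq]
  push_cast
  rfl

lemma norm_cexp_linF_le {p q : ℕ} (hp : 1 < p) (hq : 1 < q) (u : Idx D L) {z : ℂ} {R : ℝ}
    (hz : ‖z‖ ≤ R) :
    ‖Complex.exp ((Real.log p * linF (Real.log q / Real.log p) u : ℝ) * z)‖ ≤
      Real.exp (L * (Real.log p + Real.log q) * R) := by
  refine (Complex.norm_exp_le_exp_norm _).trans (Real.exp_le_exp.mpr ?_)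
  have hp1 : 0 < Real.log p := Real.log_pos (by exact_mod_cast hp)
  have hq1 : 0 < Real.log q := Real.log_pos (by exact_mod_cast hq)
  have : Real.log p * linF (Real.log q / Real.log p) u =
      (u.2.1 : ℕ) * Real.log p + (u.2.2 : ℕ) * Real.log q := by
    unfold linF; field_simp
  rw [norm_mul, Complex.norm_real, Real.norm_eq_abs, this, abs_of_nonneg (by positivity)]
  have h1 : ((u.2.1 : ℕ) : ℝ) ≤ L := by exact_mod_cast u.2.1.2.le
  have h2 : ((u.2.2 : ℕ) : ℝ) ≤ L := by exact_mod_cast u.2.2.2.le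
  have h3 : ((u.2.1 : ℕ) : ℝ) * Real.log p + (u.2.2 : ℕ) * Real.log q ≤
    L * (Real.log p + Real.log q) := by rw [mul_add]; gcongr
  gcongr

/-- For `ρ = a / b`, the values at natural numbers have denominators dividing `d ^ m₀ b ^ m₁`. -/
lemma auxF_int {p q : ℕ} (hp : 1 < p) (hq : 1 < q) {h d : ℕ} (hh : 0 < h)
    (hd : ∀ k, 1 ≤ k → k ≤ h → k ∣ d) {a b : ℤ} (hb : b ≠ 0) (c : Idx D L → ℤ) (m₀ m₁ s : ℕ) :
    ∃ k : ℤ, (d : ℂ) ^ m₀ * (b : ℂ) ^ m₁ *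
      auxF (Real.log p) (Real.log q / Real.log p) (a / b) h c m₀ m₁ s = k := by
  choose B hB using blockP_deriv_int hh hd s
  refine ⟨∑ u, c u * B u.1 m₀ * (b * (u.2.1 : ℕ) + a * (u.2.2 : ℕ)) ^ m₁ *
    ((p : ℤ) ^ (u.2.1 : ℕ) * (q : ℤ) ^ (u.2.2 : ℕ)) ^ s, ?_⟩
  unfold auxF
  simp only [cexp_linF hp hq]
  rw [Finset.mul_sum]
  push_cast
  refine Finset.sum_congr rfl fun u _ => ?_
  rw [← hB]
  have : (b * (u.2.1 : ℕ) + a * (u.2.2 : ℕ) : ℂ) = b * (linF (a / b) u : ℝ) := by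
    have hb' : (b : ℂ) ≠ 0 := by exact_mod_cast hb
    unfold linF; push_cast; field_simp
  rw [this, mul_pow]
  ring

end aux

/-! ### Siegel's lemma and non-vanishing -/

section siegel
attribute [local instance] Matrix.seminormedAddCommGroup
open Polynomial
variable {D L : ℕ}

lemma auxF_eq_sum_single (κ lam ρ : ℝ) (h : ℕ) (c : Idx D L → ℤ) (m₀ m₁ : ℕ) (z : ℂ) :
    auxF κ lam ρ h c m₀ m₁ z = ∑ u, (c u : ℂ) * auxF κ lam ρ h (Pi.single u 1) m₀ m₁ z := by
  have : ∀ u : Idx D L, auxF κ lam ρ h (Pi.single u 1) m₀ m₁ z =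
      (derivative^[m₀] (blockP h u.1)).eval z * (linF ρ u : ℂ) ^ m₁ *
        Complex.exp ((κ * linF lam u : ℝ) * z) := by
    intro u
    unfold auxF
    rw [Finset.sum_eq_single u]
    · simp
    · intro v _ hv; simp [Pi.single_eq_of_ne hv]
    · simp
  simp only [this]
  unfold auxF
  refine Finset.sum_congr rfl fun u _ => ?_
  ring

/-- There are twice as many unknowns `c u` as equations, so Siegel's lemma has exponent `1` and
bounds the solution by the number of unknowns times the size `M` of the coefficients. -/
lemma siegel_auxF {p q : ℕ} (hp : 1 < p) (hq : 1 < q) {h d T : ℕ} (hh : 0 < h) (hT : 0 < T)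
    (hd0 : d ≠ 0) (hd : ∀ k, 1 ≤ k → k ≤ h → k ∣ d) {a b : ℤ} (hb : b ≠ 0)
    (hN : D * L ^ 2 = 2 * (T * T * h)) {M : ℝ} (hM1 : 1 ≤ M)
    (hM : ∀ (u : Idx D L), ∀ m₀ < T, ∀ m₁ < T, ∀ s < h,
      ‖(d : ℂ) ^ m₀ * (b : ℂ) ^ m₁ * auxF (Real.log p) (Real.log q / Real.log p) (a / b) h
        (Pi.single u 1) m₀ m₁ s‖ ≤ M) :
    ∃ c : Idx D L → ℤ, c ≠ 0 ∧ (∀ u, |(c u : ℝ)| ≤ (D * L ^ 2 : ℕ) * M) ∧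
      ∀ m₀ < T, ∀ m₁ < T, ∀ s < h,
        auxF (Real.log p) (Real.log q / Real.log p) (a / b) h c m₀ m₁ s = 0 := by
  choose B hB using auxF_int (D := D) (L := L) hp hq hh hd (a := a) hb
  let A : Matrix (Fin T × Fin T × Fin h) (Idx D L) ℤ :=
    fun i u => B (Pi.single u 1) i.1 i.2.1 i.2.2
  have hcα : Fintype.card (Fin T × Fin T × Fin h) = T * T * h := by simp [mul_assoc]
  have hcβ : Fintype.card (Idx D L) = D * L ^ 2 := by simp [sq]
  have hpos : 0 < T * T * h := by positivity
  obtain ⟨t, ht0, htA, htn⟩ := Int.Matrix.exists_ne_zero_int_vec_norm_le A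
    (by rw [hcα, hcβ]; omega) (by rw [hcα]; exact hpos)
  refine ⟨t, ht0, ?_, ?_⟩
  · have hA : ‖A‖ ≤ M := by
      rw [Matrix.norm_le_iff (by linarith)]
      intro i u
      have := hM u i.1 i.1.2 i.2.1 i.2.1.2 i.2.2 i.2.2.2
      rw [hB] at this
      rw [Int.norm_eq_abs]
      rwa [← Complex.ofReal_intCast, Complex.norm_real, Real.norm_eq_abs] at this
    have he : ((Fintype.card (Fin T × Fin T × Fin h) : ℝ) /
        (Fintype.card (Idx D L) - Fintype.card (Fin T × Fin T × Fin h))) = 1 := by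
      rw [hcα, hcβ, hN]
      have : ((T * T * h : ℕ) : ℝ) ≠ 0 := by exact_mod_cast hpos.ne'
      push_cast at this ⊢
      rw [div_eq_one_iff_eq] <;> ring_nf
      ring_nf at this
      exact this
    rw [he, Real.rpow_one, hcβ] at htn
    intro u
    have h1 : ‖t u‖ ≤ ‖t‖ := norm_le_pi_norm t u
    rw [Int.norm_eq_abs] at h1
    refine h1.trans (htn.trans ?_)
    gcongr
    exact max_le hM1 hA
  · intro m₀ h0 m₁ h1 s hs
    have h2 := congrFun htA (⟨m₀, h0⟩, ⟨m₁, h1⟩, ⟨s, hs⟩)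
    have h3 : (d : ℂ) ^ m₀ * (b : ℂ) ^ m₁ *
        auxF (Real.log p) (Real.log q / Real.log p) (a / b) h t m₀ m₁ s = 0 := by
      rw [auxF_eq_sum_single, Finset.mul_sum]
      have h4 : ((∑ u, B (Pi.single u 1) m₀ m₁ s * t u : ℤ) : ℂ) = 0 := by
        exact_mod_cast h2
      rw [← h4]
      push_cast
      refine Finset.sum_congr rfl fun u _ => ?_
      rw [← hB]
      ring
    have hb' : (b : ℂ) ≠ 0 := by exact_mod_cast hb
    have hd' : (d : ℂ) ≠ 0 := by exact_mod_cast hd0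
    exact (_root_.mul_eq_zero.mp h3).resolve_left (mul_ne_zero (pow_ne_zero _ hd') (pow_ne_zero _ hb'))

/-- As many zeros of the auxiliary function as there are unknowns force all unknowns to vanish:
independence makes the numbers `p ^ l₁ q ^ l₂` distinct, and the Fel'dman polynomials are linearly
independent. -/
lemma nonvanishing {p q : ℕ} (hp : 1 < p) (hq : 1 < q) (hind : MultIndepPair p q) {h : ℕ}
    {ρ : ℝ} {c : Idx D L → ℤ}
    (hv : ∀ s < D * L ^ 2, auxF (Real.log p) (Real.log q / Real.log p) ρ h c 0 0 (s : ℕ) = 0) :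
    c = 0 := by
  classical
  let x : Fin L × Fin L → ℂ := fun l => (p : ℂ) ^ (l.1 : ℕ) * (q : ℂ) ^ (l.2 : ℕ)
  let P : Fin L × Fin L → ℂ[X] := fun l => ∑ n : Fin D, C (c (n, l) : ℂ) * blockP h n
  have hp0 : (p : ℝ) ≠ 0 := by exact_mod_cast (by omega : p ≠ 0)
  have hq0 : (q : ℝ) ≠ 0 := by exact_mod_cast (by omega : q ≠ 0)
  have hxi : Function.Injective x := by
    intro l l' hll
    have h1 : (p : ℝ) ^ (l.1 : ℕ) * (q : ℝ) ^ (l.2 : ℕ) =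
        (p : ℝ) ^ (l'.1 : ℕ) * (q : ℝ) ^ (l'.2 : ℕ) := by
      have : ((p : ℂ) ^ (l.1 : ℕ) * (q : ℂ) ^ (l.2 : ℕ)) =
        (p : ℂ) ^ (l'.1 : ℕ) * (q : ℂ) ^ (l'.2 : ℕ) := hll
      exact_mod_cast this
    have h2 := hind ((l.1 : ℕ) - (l'.1 : ℕ)) ((l.2 : ℕ) - (l'.2 : ℕ)) (by
      rw [zpow_sub₀ hp0, zpow_sub₀ hq0]
      simp only [zpow_natCast]
      field_simp
      exact h1)
    ext <;> omega
  have hx0 : ∀ l, x l ≠ 0 := fun l =>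
    mul_ne_zero (pow_ne_zero _ (by exact_mod_cast (by omega : p ≠ 0)))
      (pow_ne_zero _ (by exact_mod_cast (by omega : q ≠ 0)))
  have hP : ∀ l, P l = 0 := by
    refine exp_poly_zero hxi hx0 (D * L ^ 2) P (fun _ => D) (by simp [sq, mul_comm]) ?_ ?_
    · intro l
      refine lt_of_le_of_lt (degree_sum_le _ _) ((Finset.sup_lt_iff (WithBot.bot_lt_coe D)).mpr ?_)
      intro n _
      rw [← smul_eq_C_mul]
      refine lt_of_le_of_lt (degree_smul_le _ _) ?_
      rw [degree_blockP]
      exact WithBot.coe_lt_coe.mpr n.2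
    · intro s hs
      rw [← hv s hs]
      unfold auxF
      rw [Fintype.sum_prod_type_right (α₁ := Fin D) (α₂ := Fin L × Fin L)]
      refine Finset.sum_congr rfl fun l _ => ?_
      simp only [P, eval_finsetSum, Finset.sum_mul]
      refine Finset.sum_congr rfl fun n _ => ?_
      rw [cexp_linF hp hq]
      simp [x]
  funext ⟨n, l⟩
  have := blockP_lin_indep h D (fun n => (c (n, l) : ℂ)) (hP l)
  have h2 : (c (n, l) : ℂ) = 0 := congrFun this n
  exact_mod_cast h2

end siegel

/-! ### Extrapolation -/

section analytic
open Polynomial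

/-- Vanishing of the rational version at `s < S` for `m₀ + m₁ < T` propagates to `s < S'` for
`m₀ + m₁ < T'`, where `2 T' ≤ T`. Here `M` bounds the analytic version, `ε` its distance to the
rational one, and `Q` the denominators; `hfin` says that the resulting upper bound for a value times
its denominator, an integer, is less than `1`. -/
lemma extrapolation_step {D L : ℕ} {p q : ℕ} (hp : 1 < p) (hq : 1 < q) {h d : ℕ} (hh : 0 < h)
    (hd : ∀ k, 1 ≤ k → k ≤ h → k ∣ d) {a b : ℤ} (hb : 1 ≤ b) (hd0 : 0 < d)
    {c : Idx D L → ℤ} {T T' S S' : ℕ} (hT : 0 < T') (hTT : 2 * T' ≤ T) {R X M ε Q : ℝ}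
    (hSX : (S : ℝ) ≤ X) (hSX' : (S' : ℝ) ≤ X) (hX : 0 < X) (hXR : 2 * X ≤ R) (hε : 0 ≤ ε)
    (hM : ∀ m₀ m₁, m₀ + m₁ < T → ∀ z : ℂ, ‖z‖ ≤ R →
      ‖auxF (Real.log p) (Real.log q / Real.log p) (Real.log q / Real.log p) h c m₀ m₁ z‖ ≤ M)
    (hlink : ∀ m₀ m₁, m₀ + m₁ < T → ∀ z : ℂ, ‖z‖ ≤ R →
      ‖auxF (Real.log p) (Real.log q / Real.log p) (Real.log q / Real.log p) h c m₀ m₁ z -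
        auxF (Real.log p) (Real.log q / Real.log p) (a / b) h c m₀ m₁ z‖ ≤ ε)
    (hQ : ∀ m₀ m₁, m₀ + m₁ < T → (d : ℝ) ^ m₀ * (b : ℝ) ^ m₁ ≤ Q)
    (hfin : Q * (ε * (1 + Real.log p) ^ T * Real.exp (4 * T * X) +
      2 * (X / (R - X)) ^ (S * T') * M + ε) < 1)
    (hzero : ∀ m₀ m₁, m₀ + m₁ < T → ∀ s < S,
      auxF (Real.log p) (Real.log q / Real.log p) (a / b) h c m₀ m₁ (s : ℕ) = 0) :
    ∀ m₀ m₁, m₀ + m₁ < T' → ∀ s < S',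
      auxF (Real.log p) (Real.log q / Real.log p) (a / b) h c m₀ m₁ (s : ℕ) = 0 := by
  intro m₀ m₁ hm s hs
  have hlp : 0 < Real.log p := Real.log_pos (by exact_mod_cast hp)
  set F := auxF (Real.log p) (Real.log q / Real.log p) (Real.log q / Real.log p) h c with hF
  set G := auxF (Real.log p) (Real.log q / Real.log p) (a / b) h c with hG
  have hnorm : ∀ x : ℕ, (x : ℝ) ≤ X → ‖(x : ℂ)‖ ≤ R := by
    intro x hx
    rw [Complex.norm_natCast]
    linarith
  have hs' : (s : ℝ) ≤ X := le_trans (by exact_mod_cast hs.le) hSX'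
  have hder : ∀ x < S, ∀ k < T', ‖iteratedDeriv k (F m₀ m₁) (x : ℂ)‖ ≤
      (1 + Real.log p) ^ T * ε := by
    intro x hx k hk
    have hxX : (x : ℝ) ≤ X := le_trans (by exact_mod_cast hx.le) hSX
    have h1 : ∀ m₀ m₁, m₀ + m₁ < T → ‖F m₀ m₁ (x : ℂ)‖ ≤ ε := by
      intro m₀ m₁ hm
      have := hlink m₀ m₁ hm x (hnorm x hxX)
      rwa [hzero m₀ m₁ hm x hx, sub_zero] at this
    refine (iteratedDeriv_auxF_le h1 k m₀ m₁ (by omega)).trans ?_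
    rw [abs_of_pos hlp]
    gcongr
    · linarith
    · omega
  have h1 := interp_bound (differentiable_auxF (Real.log p) (Real.log q / Real.log p) h c m₀ m₁) hT
    hSX hs' hX hXR (by positivity) hder (fun z hz => hM m₀ m₁ (by omega) z hz.le)
  have h2 := hlink m₀ m₁ (by omega) s (hnorm s hs')
  have hTle : (T' : ℝ) ≤ T := by exact_mod_cast (by omega : T' ≤ T)
  have hη : (1 + Real.log p) ^ T * ε * Real.exp (4 * T' * X) ≤
      ε * (1 + Real.log p) ^ T * Real.exp (4 * T * X) := by
    rw [mul_comm _ ε]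
    gcongr
  have hGs : ‖G m₀ m₁ (s : ℂ)‖ ≤ ε * (1 + Real.log p) ^ T * Real.exp (4 * T * X) +
      2 * (X / (R - X)) ^ (S * T') * M + ε := by
    have h3 : G m₀ m₁ (s : ℂ) = F m₀ m₁ s - (F m₀ m₁ s - G m₀ m₁ s) := by ring
    rw [h3]
    refine (norm_sub_le _ _).trans ?_
    linarith
  obtain ⟨k, hk⟩ := auxF_int hp hq hh hd (a := a) (by omega : b ≠ 0) c m₀ m₁ s
  have hbR : (1 : ℝ) ≤ b := by exact_mod_cast hb
  have hk1 : |(k : ℝ)| < 1 := by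
    have : |(k : ℝ)| = ‖(k : ℂ)‖ := by
      rw [← Complex.ofReal_intCast, Complex.norm_real, Real.norm_eq_abs]
    rw [this, ← hk, norm_mul, norm_mul, norm_pow, norm_pow, Complex.norm_natCast,
      ← Complex.ofReal_intCast, Complex.norm_real, Real.norm_eq_abs, abs_of_pos (by linarith)]
    refine lt_of_le_of_lt ?_ hfin
    have := hQ m₀ m₁ (by omega)
    have hQ0 : 0 ≤ Q := le_trans (by positivity) this
    gcongr
  have hk0 : k = 0 := by
    have : |k| < 1 := by exact_mod_cast hk1
    exact Int.abs_lt_one_iff.mp this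
  rw [hk0] at hk
  have hb' : (b : ℂ) ≠ 0 := by exact_mod_cast (by omega : b ≠ 0)
  have hd' : (d : ℂ) ≠ 0 := by exact_mod_cast hd0.ne'
  exact (_root_.mul_eq_zero.mp (by simpa using hk)).resolve_left
    (mul_ne_zero (pow_ne_zero _ hd') (pow_ne_zero _ hb'))

/-- `blockP_bound` for the parameters of the main argument, on the disc of radius `r h`. -/
lemma blockP_bound_exp {h ℓ n m : ℕ} (hh : 0 < h) {r : ℝ} (hr : 0 ≤ r)
    (hrl : 2 * (r + 1) ≤ Real.exp ℓ) (hTT : ((ℓ ^ 3 : ℕ) : ℝ) ^ (ℓ ^ 3) ≤ Real.exp h)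
    (hn : n < h * (2 * ℓ ^ 2)) (hm : m < ℓ ^ 3) {z : ℂ} (hz : ‖z‖ ≤ r * h) :
    ‖(derivative^[m] (blockP h n)).eval z‖ ≤ Real.exp (h * (1 + 2 * ℓ ^ 2 * (ℓ + 1))) := by
  have hh1 : (1 : ℝ) ≤ h := by exact_mod_cast hh
  have h1 := blockP_bound hh hn (Y := (r + 1) * h) (by nlinarith) (z := z) (by linarith) m
  refine h1.trans ?_
  have h2 : 2 * ((r + 1) * h) / h = 2 * (r + 1) := by field_simp
  have h3 : (m ! : ℝ) ≤ Real.exp h := by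
    refine le_trans ?_ hTT
    exact_mod_cast (Nat.factorial_le hm.le).trans (Nat.factorial_le_pow _)
  rw [h2]
  calc (m ! : ℝ) * ((2 * (r + 1)) ^ h * Real.exp h) ^ (2 * ℓ ^ 2)
      ≤ Real.exp h * (Real.exp ℓ ^ h * Real.exp h) ^ (2 * ℓ ^ 2) := by gcongr
    _ = Real.exp (h * (1 + 2 * ℓ ^ 2 * (ℓ + 1))) := by
      rw [← Real.exp_nat_mul, ← Real.exp_add, ← Real.exp_nat_mul, ← Real.exp_add]
      congr 1
      push_cast
      ring

/-- Size of the auxiliary function for the parameters of the main argument. The hypotheses `hTT`,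
`hN`, `hWT` express that `h` is large in terms of the fixed parameters: each of the corresponding
lower-order factors is absorbed in one factor `e ^ h`. -/
lemma auxF_bound_exp {p q h ℓ : ℕ} (hp : 1 < p) (hq : 1 < q) (hh : 0 < h) (hl : 0 < ℓ)
    {r ρ W Cc : ℝ} (hr : 0 ≤ r) (hrl : 2 * (r + 1) ≤ Real.exp ℓ)
    (hTT : ((ℓ ^ 3 : ℕ) : ℝ) ^ (ℓ ^ 3) ≤ Real.exp h)
    (hN : ((h * (2 * ℓ ^ 2) * (ℓ ^ 2) ^ 2 : ℕ) : ℝ) ≤ Real.exp h)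
    (hW1 : 1 ≤ W) (hWT : W ^ (ℓ ^ 3) ≤ Real.exp h)
    {c : Idx (h * (2 * ℓ ^ 2)) (ℓ ^ 2) → ℤ} (hc : ∀ u, |(c u : ℝ)| ≤ Cc)
    (hW : ∀ u : Idx (h * (2 * ℓ ^ 2)) (ℓ ^ 2), |linF ρ u| ≤ W)
    {m₀ m₁ : ℕ} (hm₀ : m₀ < ℓ ^ 3) (hm₁ : m₁ < ℓ ^ 3) {z : ℂ} (hz : ‖z‖ ≤ r * h) :
    ‖auxF (Real.log p) (Real.log q / Real.log p) ρ h c m₀ m₁ z‖ ≤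
      Cc * Real.exp (h * (7 * ℓ ^ 3 + (Real.log p + Real.log q) * ℓ ^ 2 * r)) := by
  have hCc : 0 ≤ Cc := (abs_nonneg _).trans (hc (⟨0, by positivity⟩, ⟨0, by positivity⟩,
    ⟨0, by positivity⟩))
  have h1 := norm_auxF_le (m₁ := m₁) hc
    (fun n hn => blockP_bound_exp hh hr hrl hTT hn hm₀ hz) hW
    (fun u => norm_cexp_linF_le hp hq u hz)
  refine h1.trans ?_
  have h2 : W ^ m₁ ≤ Real.exp h := (pow_le_pow_right₀ hW1 hm₁.le).trans hWT
  calc _ ≤ Real.exp h * (Cc * Real.exp (h * (1 + 2 * ℓ ^ 2 * (ℓ + 1))) * Real.exp h *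
        Real.exp (((ℓ ^ 2 : ℕ) : ℝ) * (Real.log p + Real.log q) * (r * h))) := by gcongr
    _ = Cc * Real.exp (h + h * (1 + 2 * ℓ ^ 2 * (ℓ + 1)) + h +
        ((ℓ ^ 2 : ℕ) : ℝ) * (Real.log p + Real.log q) * (r * h)) := by
      rw [Real.exp_add, Real.exp_add, Real.exp_add]; ring
    _ ≤ _ := by
      gcongr
      push_cast
      have hl1 : (1 : ℝ) ≤ ℓ := by exact_mod_cast hl
      have hh1 : (1 : ℝ) ≤ h := by exact_mod_cast hh
      have h3 : (ℓ : ℝ) ^ 2 ≤ ℓ ^ 3 := pow_le_pow_right₀ hl1 (by norm_num)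
      have h4 : (1 : ℝ) ≤ ℓ ^ 3 := one_le_pow₀ hl1
      have h5 : (3 : ℝ) + 2 * ℓ ^ 3 + 2 * ℓ ^ 2 ≤ 7 * ℓ ^ 3 := by linarith
      have h6 := mul_le_mul_of_nonneg_left h5 (by linarith : (0:ℝ) ≤ h)
      linarith

/-- Distance between the analytic and the rational version, under the hypotheses of
`auxF_bound_exp`. -/
lemma auxF_link_exp {p q h ℓ : ℕ} (hp : 1 < p) (hq : 1 < q) (hh : 0 < h) (hl : 0 < ℓ)
    {r ρ W Cc : ℝ} (hr : 0 ≤ r) (hrl : 2 * (r + 1) ≤ Real.exp ℓ)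
    (hTT : ((ℓ ^ 3 : ℕ) : ℝ) ^ (ℓ ^ 3) ≤ Real.exp h)
    (hN : ((h * (2 * ℓ ^ 2) * (ℓ ^ 2) ^ 2 : ℕ) : ℝ) ≤ Real.exp h)
    (hW1 : 1 ≤ W) (hWT : W ^ (ℓ ^ 3) ≤ Real.exp h) (hLW : ((ℓ ^ 2 : ℕ) : ℝ) ≤ W)
    {c : Idx (h * (2 * ℓ ^ 2)) (ℓ ^ 2) → ℤ} (hc : ∀ u, |(c u : ℝ)| ≤ Cc)
    (hW : ∀ u : Idx (h * (2 * ℓ ^ 2)) (ℓ ^ 2), |linF (Real.log q / Real.log p) u| ≤ W)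
    (hW' : ∀ u : Idx (h * (2 * ℓ ^ 2)) (ℓ ^ 2), |linF ρ u| ≤ W)
    {m₀ m₁ : ℕ} (hm₀ : m₀ < ℓ ^ 3) (hm₁ : m₁ < ℓ ^ 3) {z : ℂ} (hz : ‖z‖ ≤ r * h) :
    ‖auxF (Real.log p) (Real.log q / Real.log p) (Real.log q / Real.log p) h c m₀ m₁ z -
      auxF (Real.log p) (Real.log q / Real.log p) ρ h c m₀ m₁ z‖ ≤
      Cc * Real.exp (h * (8 * ℓ ^ 3 + (Real.log p + Real.log q) * ℓ ^ 2 * r)) *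
        |Real.log q / Real.log p - ρ| := by
  have hCc : 0 ≤ Cc := (abs_nonneg _).trans (hc (⟨0, by positivity⟩, ⟨0, by positivity⟩,
    ⟨0, by positivity⟩))
  have h1 := norm_auxF_sub_le (m₁ := m₁) hc
    (fun n hn => blockP_bound_exp hh hr hrl hTT hn hm₀ hz) hLW hW hW'
    (fun u => norm_cexp_linF_le hp hq u hz)
  refine h1.trans ?_
  have h2 : W ^ m₁ ≤ Real.exp h := (pow_le_pow_right₀ hW1 hm₁.le).trans hWT
  have h3 : (m₁ : ℝ) ≤ Real.exp h := by
    refine le_trans ?_ hTT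
    exact_mod_cast hm₁.le.trans (Nat.le_self_pow (by positivity) _)
  calc _ ≤ Real.exp h * (Cc * Real.exp (h * (1 + 2 * ℓ ^ 2 * (ℓ + 1))) *
        (Real.exp h * Real.exp h * |Real.log q / Real.log p - ρ|) *
        Real.exp (((ℓ ^ 2 : ℕ) : ℝ) * (Real.log p + Real.log q) * (r * h))) := by gcongr
    _ = Cc * Real.exp (h + h * (1 + 2 * ℓ ^ 2 * (ℓ + 1)) + h + h +
        ((ℓ ^ 2 : ℕ) : ℝ) * (Real.log p + Real.log q) * (r * h)) *
          |Real.log q / Real.log p - ρ| := by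
      rw [Real.exp_add, Real.exp_add, Real.exp_add, Real.exp_add]; ring
    _ ≤ _ := by
      gcongr
      push_cast
      have hl1 : (1 : ℝ) ≤ ℓ := by exact_mod_cast hl
      have hh1 : (1 : ℝ) ≤ h := by exact_mod_cast hh
      have h3 : (ℓ : ℝ) ^ 2 ≤ ℓ ^ 3 := pow_le_pow_right₀ hl1 (by norm_num)
      have h4 : (1 : ℝ) ≤ ℓ ^ 3 := one_le_pow₀ hl1
      have h5 : (4 : ℝ) + 2 * ℓ ^ 3 + 2 * ℓ ^ 2 ≤ 8 * ℓ ^ 3 := by linarith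
      have h6 := mul_le_mul_of_nonneg_left h5 (by linarith : (0:ℝ) ≤ h)
      linarith

end analytic

/-! ### The lower bound -/

section core
open Polynomial

lemma four_exp_neg_two_lt : 4 * Real.exp (-2) < 1 := by
  have h1 : Real.exp (-2) * Real.exp 2 = 1 := by rw [← Real.exp_add]; simp
  have h2 : Real.exp 2 = Real.exp 1 * Real.exp 1 := by rw [← Real.exp_add]; norm_num
  have h3 := Real.exp_one_gt_d9
  have h4 : 4 < Real.exp 2 := by rw [h2]; nlinarith
  have h5 := Real.exp_pos (-2)
  nlinarith

/-- The inequality `hfin` of `extrapolation_step` in the main argument, with `t = ℓ ^ 3`,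
`g = G ^ j`, `B = ℓ ^ 3 G ^ 7`. The three summands come from the derivatives at the nodes, the
interpolation remainder, and the passage from the analytic to the rational version; each contributes
at most a multiple of `e ^ (-2)`, and the multiples add up to `4`. -/
lemma error_budget {h t g B K κ A₁ A₂ P : ℝ} (hh : 1 ≤ h) (ht : 1 ≤ t) (hg : 1 ≤ g)
    (hB : t * g ≤ B) (hK : 0 ≤ K) (hκ : 0 ≤ κ) (hA₂' : 0 ≤ A₂)
    (hA₁ : A₁ ≤ Real.exp h) (hA₂ : A₂ ≤ Real.exp (4 * h * B))
    (hP : P ≤ Real.exp (-(h * g * t * (2 * K + 3 * κ + 19)))) :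
    Real.exp (h * ((K + 1) * t)) *
      (Real.exp (h * ((K + κ + 9) * t)) * Real.exp (h * (8 * t + κ * (2 * t * g))) *
          Real.exp (-((2 * K + 3 * κ + 30) * B * h)) * A₁ * A₂ +
        2 * P * (Real.exp (h * ((K + κ + 9) * t)) * Real.exp (h * (7 * t + κ * (2 * t * g)))) +
        Real.exp (h * ((K + κ + 9) * t)) * Real.exp (h * (8 * t + κ * (2 * t * g))) *
          Real.exp (-((2 * K + 3 * κ + 30) * B * h))) < 1 := by
  have htg : t ≤ t * g := le_mul_of_one_le_right (by linarith) hg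
  have hB1 : 1 ≤ B := by linarith
  have hhB : 1 ≤ h * B := one_le_mul_of_one_le_of_one_le hh hB1
  have hht : h * t ≤ h * (t * g) := by gcongr
  have hhtB : h * (t * g) ≤ h * B := by gcongr
  have hhB' : h ≤ h * B := le_mul_of_one_le_right (by linarith) hB1
  have hhtg1 : 1 ≤ h * (t * g) := one_le_mul_of_one_le_of_one_le hh (by linarith)
  have hKt : K * (h * t) ≤ K * (h * (t * g)) := by gcongr
  have hKB : K * (h * (t * g)) ≤ K * (h * B) := by gcongr
  have hκt : κ * (h * t) ≤ κ * (h * (t * g)) := by gcongr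
  have hκB : κ * (h * (t * g)) ≤ κ * (h * B) := by gcongr
  set Z := Real.exp (h * ((K + 1) * t)) * (Real.exp (h * ((K + κ + 9) * t)) *
    Real.exp (h * (8 * t + κ * (2 * t * g))) * Real.exp (-((2 * K + 3 * κ + 30) * B * h))) with hZ
  have hZ0 : 0 ≤ Z := by positivity
  have e3 : Z ≤ Real.exp (-2) := by
    rw [hZ, ← Real.exp_add, ← Real.exp_add, ← Real.exp_add]
    apply Real.exp_le_exp.mpr
    linarith
  have e1 : Z * (A₁ * A₂) ≤ Real.exp (-2) := by
    calc Z * (A₁ * A₂) ≤ Z * (Real.exp h * Real.exp (4 * h * B)) := by gcongr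
      _ ≤ _ := by
        rw [hZ, ← Real.exp_add, ← Real.exp_add, ← Real.exp_add, ← Real.exp_add, ← Real.exp_add]
        apply Real.exp_le_exp.mpr
        linarith
  have e2 : Real.exp (h * ((K + 1) * t)) * (P * (Real.exp (h * ((K + κ + 9) * t)) *
      Real.exp (h * (7 * t + κ * (2 * t * g))))) ≤ Real.exp (-2) := by
    calc _ ≤ Real.exp (h * ((K + 1) * t)) * (Real.exp (-(h * g * t * (2 * K + 3 * κ + 19))) *
          (Real.exp (h * ((K + κ + 9) * t)) * Real.exp (h * (7 * t + κ * (2 * t * g))))) := by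
          gcongr
      _ ≤ _ := by
        rw [← Real.exp_add, ← Real.exp_add, ← Real.exp_add]
        apply Real.exp_le_exp.mpr
        linarith
  have := four_exp_neg_two_lt
  calc _ = Z * (A₁ * A₂) + 2 * (Real.exp (h * ((K + 1) * t)) * (P *
      (Real.exp (h * ((K + κ + 9) * t)) * Real.exp (h * (7 * t + κ * (2 * t * g)))))) + Z := by
        rw [hZ]; ring
    _ < 1 := by linarith

set_option maxHeartbeats 1000000 in
/-- The main argument: for the parameters `L = ℓ ^ 2`, `T = ℓ ^ 3`, `D = 2 h ℓ ^ 2` and `h` large, the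
ratio `λ = log q / log p` cannot be within `e ^ (-ν h)` of `a / b` with `b ≤ e ^ h`. The hypothesis
`hlogE` makes the gain from interpolation exceed all losses; the factor `128 = 2 ^ 7` accounts for
halving `T` seven times. The number `d` stands for `lcm(1, …, h)`, and `W` bounds the linear forms
`l₁ + l₂ λ` and `l₁ + l₂ a / b`. -/
lemma core_fixed {p q : ℕ} (hp : 1 < p) (hq : 1 < q) (hind : MultIndepPair p q)
    {e E G ℓ h d : ℕ} (he : 0 < e) (hE : E = 2 * e) (hG : G = 2 * E ^ 6) (hl : ℓ = E * G)
    {K κ W : ℝ} (hK : 0 ≤ K) (hκ : κ = Real.log p + Real.log q)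
    (hlogE : 128 * (2 * K + 3 * κ + 19) ≤ Real.log E)
    (hexp : 2 * (2 * E * (G : ℝ) ^ 7 + 1) ≤ Real.exp ℓ)
    (hh : 0 < h) (hd0 : 0 < d) (hd : ∀ k, 1 ≤ k → k ≤ h → k ∣ d) (hdK : (d : ℝ) ≤ Real.exp (K * h))
    (hTT : ((ℓ ^ 3 : ℕ) : ℝ) ^ (ℓ ^ 3) ≤ Real.exp h)
    (hN : ((h * (2 * ℓ ^ 2) * (ℓ ^ 2) ^ 2 : ℕ) : ℝ) ≤ Real.exp h)
    (hW1 : 1 ≤ W) (hWT : W ^ (ℓ ^ 3) ≤ Real.exp h) (hLW : ((ℓ ^ 2 : ℕ) : ℝ) ≤ W)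
    (hpT : (1 + Real.log p) ^ (ℓ ^ 3) ≤ Real.exp h)
    {a b : ℤ} (hb : 1 ≤ b) (hbh : (b : ℝ) ≤ Real.exp h)
    (hW : ∀ u : Idx (h * (2 * ℓ ^ 2)) (ℓ ^ 2), |linF (Real.log q / Real.log p) u| ≤ W)
    (hW' : ∀ u : Idx (h * (2 * ℓ ^ 2)) (ℓ ^ 2), |linF (a / b : ℝ) u| ≤ W)
    (hδ : |Real.log q / Real.log p - a / b| ≤
      Real.exp (-((2 * K + 3 * κ + 30) * (ℓ ^ 3 * G ^ 7) * h))) : False := by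
  have hlp : 0 < Real.log p := Real.log_pos (by exact_mod_cast hp)
  have hlq : 0 < Real.log q := Real.log_pos (by exact_mod_cast hq)
  have hκ0 : 0 ≤ κ := by rw [hκ]; positivity
  have hE0 : 0 < E := by omega
  have hG0 : 0 < G := by rw [hG]; positivity
  have hl0 : 0 < ℓ := by rw [hl]; positivity
  have hlR : (1 : ℝ) ≤ ℓ := by exact_mod_cast hl0
  have hhR : (1 : ℝ) ≤ h := by exact_mod_cast hh
  have hER : (1 : ℝ) ≤ E := by exact_mod_cast hE0
  have hGR : (1 : ℝ) ≤ G := by exact_mod_cast hG0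
  have hbR : (1 : ℝ) ≤ b := by exact_mod_cast hb
  have hdR : (1 : ℝ) ≤ d := by exact_mod_cast hd0
  have hl3 : (1 : ℝ) ≤ (ℓ : ℝ) ^ 3 := one_le_pow₀ hlR
  have hl23 : (ℓ : ℝ) ^ 2 ≤ ℓ ^ 3 := pow_le_pow_right₀ hlR (by norm_num)
  have hQ1 : ∀ m₀ ≤ ℓ ^ 3, ∀ m₁ ≤ ℓ ^ 3, (d : ℝ) ^ m₀ * (b : ℝ) ^ m₁ ≤
      Real.exp (h * ((K + 1) * (ℓ : ℝ) ^ 3)) := by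
    intro m₀ h0 m₁ h1
    calc (d : ℝ) ^ m₀ * (b : ℝ) ^ m₁ ≤ (d : ℝ) ^ (ℓ ^ 3) * (b : ℝ) ^ (ℓ ^ 3) := by gcongr
      _ ≤ Real.exp (K * h) ^ (ℓ ^ 3) * Real.exp h ^ (ℓ ^ 3) := by gcongr
      _ = _ := by
        rw [← Real.exp_nat_mul, ← Real.exp_nat_mul, ← Real.exp_add]
        congr 1
        push_cast
        ring
  obtain ⟨c, hc0, hcb, hcz⟩ := siegel_auxF (D := h * (2 * ℓ ^ 2)) (L := ℓ ^ 2) hp hq hh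
    (T := ℓ ^ 3) (by positivity) hd0.ne' hd (a := a) (by omega : b ≠ 0) (by ring)
    (M := Real.exp (h * ((K + 1) * (ℓ : ℝ) ^ 3)) * Real.exp (h * (7 * ℓ ^ 3 + κ * ℓ ^ 2)))
    (by
      rw [← Real.exp_add]
      apply Real.one_le_exp
      positivity)
    (by
      intro u m₀ h0 m₁ h1 s hs
      rw [norm_mul, norm_mul, norm_pow, norm_pow, Complex.norm_natCast,
        ← Complex.ofReal_intCast, Complex.norm_real, Real.norm_eq_abs, abs_of_pos (by linarith)]
      have h2 := auxF_bound_exp hp hq hh hl0 (r := 1) zero_le_one (by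
        refine le_trans ?_ hexp
        have : (1:ℝ) ≤ E * (G:ℝ) ^ 7 := one_le_mul_of_one_le_of_one_le hER (one_le_pow₀ hGR)
        linarith) hTT hN hW1 hWT (Cc := 1) (c := Pi.single u 1) (by
          intro v
          by_cases hv : v = u
          · subst hv; simp
          · simp [Pi.single_eq_of_ne hv]) hW' h0 h1 (z := (s : ℂ)) (by
            rw [Complex.norm_natCast, one_mul]; exact_mod_cast hs.le)
      rw [one_mul, mul_one, ← hκ] at h2
      exact mul_le_mul (hQ1 m₀ h0.le m₁ h1.le) h2 (norm_nonneg _) (by positivity))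
  have hcb' : ∀ u, |(c u : ℝ)| ≤ Real.exp (h * ((K + κ + 9) * (ℓ : ℝ) ^ 3)) := by
    intro u
    refine (hcb u).trans ?_
    calc _ ≤ Real.exp h * (Real.exp (h * ((K + 1) * (ℓ : ℝ) ^ 3)) *
          Real.exp (h * (7 * ℓ ^ 3 + κ * ℓ ^ 2))) := by gcongr
      _ ≤ _ := by
        rw [← Real.exp_add, ← Real.exp_add]
        apply Real.exp_le_exp.mpr
        have h1 : κ * (ℓ : ℝ) ^ 2 ≤ κ * ℓ ^ 3 := by gcongr
        have h2 : 1 + (K + 1) * (ℓ : ℝ) ^ 3 + (7 * ℓ ^ 3 + κ * ℓ ^ 2) ≤ (K + κ + 9) * ℓ ^ 3 := by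
          linarith
        have h3 := mul_le_mul_of_nonneg_left h2 (by linarith : (0:ℝ) ≤ h)
        linarith
  -- `E` is even, so `128 ∣ ℓ ^ 3` and `T` can be halved seven times, leaving `t`.
  obtain ⟨t, ht⟩ : ∃ t, ℓ ^ 3 = 128 * t :=
    ⟨2 * e ^ 7 * ℓ ^ 2, by rw [pow_succ ℓ 2, hl, hG, hE]; ring⟩
  have ht0 : 0 < t := by
    rcases Nat.eq_zero_or_pos t with h | h
    · rw [h] at ht
      have : 0 < ℓ ^ 3 := by positivity
      omega
    · exact h
  -- Step `j` extends the range of zeros by the factor `G` and halves `T`.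
  have main : ∀ j ≤ 7, ∀ m₀ m₁, m₀ + m₁ < ℓ ^ 3 / 2 ^ j → ∀ s < h * G ^ j,
      auxF (Real.log p) (Real.log q / Real.log p) (a / b) h c m₀ m₁ (s : ℕ) = 0 := by
    intro j
    induction j with
    | zero =>
      intro _ m₀ m₁ hm s hs
      rw [pow_zero, Nat.div_one] at hm
      exact hcz m₀ (by omega) m₁ (by omega) s (by simpa using hs)
    | succ j ih =>
      intro hj
      have hTle : ℓ ^ 3 / 2 ^ j ≤ ℓ ^ 3 := Nat.div_le_self _ _
      have hj7 : 2 ^ (j + 1) ≤ 2 ^ 7 := Nat.pow_le_pow_right (by norm_num) hj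
      have htT : t ≤ ℓ ^ 3 / 2 ^ (j + 1) := by
        rw [Nat.le_div_iff_mul_le (by positivity), ht, mul_comm]
        gcongr
        exact hj7
      have hGj : (1 : ℝ) ≤ (G : ℝ) ^ j := one_le_pow₀ hGR
      have hGj7 : (G : ℝ) ^ (j + 1) ≤ (G : ℝ) ^ 7 := pow_le_pow_right₀ hGR hj
      have hr : 2 * ((2 * E * (G : ℝ) ^ (j + 1)) + 1) ≤ Real.exp ℓ := by
        refine le_trans ?_ hexp
        gcongr
      have hκr : κ * (ℓ : ℝ) ^ 2 * (2 * E * (G : ℝ) ^ (j + 1)) = κ * (2 * ℓ ^ 3 * G ^ j) := by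
        have : (ℓ : ℝ) = E * G := by rw [hl]; push_cast; ring
        calc _ = κ * ((ℓ : ℝ) ^ 2 * (E * G) * (2 * G ^ j)) := by ring
          _ = _ := by rw [← this]; ring
      have hX0 : 0 < (h : ℝ) * (G : ℝ) ^ (j + 1) := by positivity
      refine extrapolation_step hp hq hh hd hb hd0 (T := ℓ ^ 3 / 2 ^ j) (S := h * G ^ j)
        (lt_of_lt_of_le ht0 htT) ?_ (X := h * (G : ℝ) ^ (j + 1))
        (R := 2 * E * (G : ℝ) ^ (j + 1) * h)
        (M := Real.exp (h * ((K + κ + 9) * (ℓ : ℝ) ^ 3)) *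
          Real.exp (h * (7 * (ℓ : ℝ) ^ 3 + κ * (2 * ℓ ^ 3 * G ^ j))))
        (ε := Real.exp (h * ((K + κ + 9) * (ℓ : ℝ) ^ 3)) *
          Real.exp (h * (8 * (ℓ : ℝ) ^ 3 + κ * (2 * ℓ ^ 3 * G ^ j))) *
          Real.exp (-((2 * K + 3 * κ + 30) * (ℓ ^ 3 * G ^ 7) * h)))
        (Q := Real.exp (h * ((K + 1) * (ℓ : ℝ) ^ 3)))
        ?_ ?_ hX0 ?_ (by positivity) ?_ ?_ ?_ ?_ (ih (by omega))
      · rw [pow_succ 2 j, ← Nat.div_div_eq_div_mul]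
        omega
      · push_cast
        gcongr
        exact Nat.le_succ j
      · push_cast; rfl
      · nlinarith
      · intro m₀ m₁ hm z hz
        have := auxF_bound_exp hp hq hh hl0 (by positivity) hr hTT hN hW1 hWT hcb' hW
          (m₀ := m₀) (m₁ := m₁) (by omega) (by omega) hz
        rwa [← hκ, hκr] at this
      · intro m₀ m₁ hm z hz
        have := auxF_link_exp hp hq hh hl0 (by positivity) hr hTT hN hW1 hWT hLW hcb' hW hW'
          (m₀ := m₀) (m₁ := m₁) (by omega) (by omega) hz
        rw [← hκ, hκr] at this
        refine this.trans ?_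
        gcongr
      · intro m₀ m₁ hm
        exact hQ1 m₀ (by omega) m₁ (by omega)
      · refine error_budget hhR hl3 hGj (by gcongr; omega) hK hκ0
          (by positivity) ?_ ?_ ?_
        · refine le_trans ?_ hpT
          gcongr
          linarith
        · apply Real.exp_le_exp.mpr
          have h1 : ((ℓ ^ 3 / 2 ^ j : ℕ) : ℝ) ≤ (ℓ : ℝ) ^ 3 := by exact_mod_cast hTle
          calc 4 * ((ℓ ^ 3 / 2 ^ j : ℕ) : ℝ) * (h * (G : ℝ) ^ (j + 1))
              ≤ 4 * (ℓ : ℝ) ^ 3 * (h * (G : ℝ) ^ 7) := by gcongr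
            _ = _ := by ring
        · have h1 : h * (G : ℝ) ^ (j + 1) / (2 * E * (G : ℝ) ^ (j + 1) * h -
              h * (G : ℝ) ^ (j + 1)) ≤ Real.exp (-Real.log E) := by
            rw [Real.exp_neg, Real.exp_log (by linarith), ← one_div,
              div_le_div_iff₀ (by nlinarith) (by linarith)]
            nlinarith
          have h0 : 0 ≤ h * (G : ℝ) ^ (j + 1) / (2 * E * (G : ℝ) ^ (j + 1) * h -
              h * (G : ℝ) ^ (j + 1)) := div_nonneg hX0.le (by nlinarith)
          have hlE : 0 ≤ Real.log E := Real.log_nonneg hER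
          have htR : (ℓ : ℝ) ^ 3 = 128 * t := by exact_mod_cast ht
          have htR' : (t : ℝ) ≤ ((ℓ ^ 3 / 2 ^ (j + 1) : ℕ) : ℝ) := by exact_mod_cast htT
          refine (pow_le_pow_left₀ h0 h1 _).trans ?_
          rw [← Real.exp_nat_mul]
          apply Real.exp_le_exp.mpr
          rw [mul_neg, neg_le_neg_iff]
          calc (h : ℝ) * G ^ j * ℓ ^ 3 * (2 * K + 3 * κ + 19)
              = h * G ^ j * t * (128 * (2 * K + 3 * κ + 19)) := by rw [htR]; ring
            _ ≤ h * G ^ j * ((ℓ ^ 3 / 2 ^ (j + 1) : ℕ) : ℝ) * Real.log E := by gcongr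
            _ = _ := by push_cast; ring
  -- `D * L ^ 2 = 2 h ℓ ^ 6 = 2 h E ^ 6 G ^ 6 = h G ^ 7`.
  refine hc0 (nonvanishing hp hq hind (h := h) (ρ := a / b) fun s hs => main 7 le_rfl 0 0 ?_ s ?_)
  · rw [ht]
    omega
  · refine lt_of_lt_of_eq hs ?_
    rw [hl, hG]
    ring

end core

section final
open Filter

lemma abs_linF_le {D L : ℕ} {ρ B : ℝ} (hρ : |ρ| ≤ B) (u : Idx D L) : |linF ρ u| ≤ L * (1 + B) := by
  have h1 : ((u.2.1 : ℕ) : ℝ) ≤ L := by exact_mod_cast u.2.1.2.le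
  have h2 : ((u.2.2 : ℕ) : ℝ) ≤ L := by exact_mod_cast u.2.2.2.le
  unfold linF
  refine (abs_add_le _ _).trans ?_
  rw [abs_mul, Nat.abs_cast, Nat.abs_cast, mul_add, mul_one]
  gcongr

/-- The largest ratio `2 E G ^ 7` between the radius of a circle of interpolation and `h` is
negligible against `e ^ ℓ`, where `G = 2 E ^ 6` and `ℓ = E G`. -/
lemma two_mul_le_exp {E : ℕ} (hE : 2 ≤ E) :
    2 * (2 * E * ((2 * E ^ 6 : ℕ) : ℝ) ^ 7 + 1) ≤ Real.exp ((E * (2 * E ^ 6) : ℕ) : ℝ) := by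
  have hE' : (2 : ℝ) ≤ E := by exact_mod_cast hE
  have h1 : (53 : ℝ) * E ≤ ((E * (2 * E ^ 6) : ℕ) : ℝ) := by
    have : 2 ^ 6 ≤ E ^ 6 := Nat.pow_le_pow_left hE 6
    have h2 : 53 * E ≤ E * (2 * E ^ 6) := by nlinarith
    exact_mod_cast h2
  have h2 : (E : ℝ) ≤ Real.exp E := by linarith [Real.add_one_le_exp (E : ℝ)]
  have h3 : (1 : ℝ) ≤ (E : ℝ) ^ 43 := one_le_pow₀ (by linarith)
  calc 2 * (2 * E * ((2 * E ^ 6 : ℕ) : ℝ) ^ 7 + 1) = 512 * (E : ℝ) ^ 43 + 2 := by push_cast; ring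
    _ ≤ 2 ^ 10 * (E : ℝ) ^ 43 := by linarith
    _ ≤ (E : ℝ) ^ 10 * (E : ℝ) ^ 43 := by gcongr
    _ = (E : ℝ) ^ 53 := by ring
    _ ≤ Real.exp E ^ 53 := by gcongr
    _ = Real.exp (53 * E) := by rw [← Real.exp_nat_mul]; norm_num
    _ ≤ _ := Real.exp_le_exp.mpr h1

/-- Lower bound for `|λ - a / b|`, polynomial in `b`, for fractions with `b ≤ e ^ h`. -/
lemma core {p q : ℕ} (hp : 1 < p) (hq : 1 < q) (hind : MultIndepPair p q) :
    ∃ ν : ℝ, ∀ᶠ h : ℕ in atTop, ∀ a b : ℤ, 1 ≤ b → (b : ℝ) ≤ Real.exp h →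
      Real.exp (-(ν * h)) < |Real.log q / Real.log p - a / b| := by
  have hlp : 0 < Real.log p := Real.log_pos (by exact_mod_cast hp)
  have hlq : 0 < Real.log q := Real.log_pos (by exact_mod_cast hq)
  -- `lcm(1, …, h) ≤ e ^ (K h)` by Chebyshev's bound for `ψ`.
  obtain ⟨K, hKdef⟩ : ∃ K : ℝ, K = Real.log 4 + 4 := ⟨_, rfl⟩
  have hK : 0 ≤ K := by have := Real.log_nonneg (by norm_num : (1:ℝ) ≤ 4); linarith
  obtain ⟨κ, hκ⟩ : ∃ κ : ℝ, κ = Real.log p + Real.log q := ⟨_, rfl⟩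
  have hκ0 : 0 ≤ κ := by rw [hκ]; positivity
  obtain ⟨e, hlog, he⟩ : ∃ e : ℕ, 128 * (2 * K + 3 * κ + 19) ≤ Real.log (e : ℝ) ∧ 0 < e :=
    (((Real.tendsto_log_atTop.comp tendsto_natCast_atTop_atTop).eventually_ge_atTop _).and
      (eventually_gt_atTop 0)).exists
  obtain ⟨E, hE⟩ : ∃ E, E = 2 * e := ⟨_, rfl⟩
  obtain ⟨G, hG⟩ : ∃ G, G = 2 * E ^ 6 := ⟨_, rfl⟩
  obtain ⟨ℓ, hl⟩ : ∃ ℓ, ℓ = E * G := ⟨_, rfl⟩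
  have hlogE : 128 * (2 * K + 3 * κ + 19) ≤ Real.log E := by
    refine hlog.trans (Real.log_le_log (by exact_mod_cast he) ?_)
    exact_mod_cast (by omega : e ≤ E)
  have hexp : 2 * (2 * E * (G : ℝ) ^ 7 + 1) ≤ Real.exp ℓ := by
    rw [hl, hG]
    exact two_mul_le_exp (by omega)
  have hl0 : 0 < ℓ := by rw [hl, hG, hE]; positivity
  obtain ⟨lam, hlam⟩ : ∃ lam : ℝ, lam = Real.log q / Real.log p := ⟨_, rfl⟩
  have hlam0 : 0 < lam := by rw [hlam]; positivity
  obtain ⟨W, hWd⟩ : ∃ W : ℝ, W = ((ℓ ^ 2 : ℕ) : ℝ) * (1 + (lam + 1)) := ⟨_, rfl⟩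
  have hl2 : (1 : ℝ) ≤ ((ℓ ^ 2 : ℕ) : ℝ) := by exact_mod_cast Nat.one_le_pow _ _ hl0
  have hLW : ((ℓ ^ 2 : ℕ) : ℝ) ≤ W := by
    rw [hWd]; exact le_mul_of_one_le_right (by linarith) (by linarith)
  have hexpt : Tendsto (fun h : ℕ => Real.exp h) atTop atTop :=
    Real.tendsto_exp_atTop.comp tendsto_natCast_atTop_atTop
  have hNev : ∀ᶠ h : ℕ in atTop,
      ((h * (2 * ℓ ^ 2) * (ℓ ^ 2) ^ 2 : ℕ) : ℝ) ≤ Real.exp h := by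
    filter_upwards [((Real.tendsto_exp_div_pow_atTop 1).comp
      tendsto_natCast_atTop_atTop).eventually_ge_atTop (((2 * ℓ ^ 2) * (ℓ ^ 2) ^ 2 : ℕ) : ℝ),
      eventually_gt_atTop 0] with h h1 h2
    have h3 : (0 : ℝ) < h := by exact_mod_cast h2
    simp only [Function.comp, pow_one] at h1
    rw [le_div_iff₀ h3] at h1
    refine le_trans (le_of_eq ?_) h1
    push_cast
    ring
  refine ⟨(2 * K + 3 * κ + 30) * (ℓ ^ 3 * G ^ 7), ?_⟩
  filter_upwards [eventually_gt_atTop 0, hNev,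
    hexpt.eventually_ge_atTop (((ℓ ^ 3 : ℕ) : ℝ) ^ (ℓ ^ 3)),
    hexpt.eventually_ge_atTop (W ^ (ℓ ^ 3)),
    hexpt.eventually_ge_atTop ((1 + Real.log p) ^ (ℓ ^ 3))] with h hh hN hTT hWT hpT a b hb hbh
  by_contra! hδ
  have hdK : ((Nat.lcmUpto h : ℕ) : ℝ) ≤ Real.exp (K * h) := by
    have h1 := Chebyshev.psi_le_const_mul_self (x := (h : ℝ)) (by positivity)
    have h2 : (0 : ℝ) < (Nat.lcmUpto h : ℕ) := by exact_mod_cast Nat.lcmUpto_pos h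
    rw [← Real.exp_log h2]
    apply Real.exp_le_exp.mpr
    rw [hKdef]
    refine le_trans (le_of_eq ?_) h1
    rw [Chebyshev.psi_eq_log_lcmUpto]
  refine core_fixed hp hq hind he hE hG hl hK hκ hlogE hexp hh (Nat.lcmUpto_pos h)
    (fun k h1 h2 => Finset.dvd_lcm (f := id) (Finset.mem_Icc.mpr ⟨h1, h2⟩)) hdK hTT hN
    (hl2.trans hLW) hWT hLW hpT hb hbh ?_ ?_ hδ
  · intro u
    rw [hWd, ← hlam]
    exact abs_linF_le (by rw [abs_of_pos hlam0]; linarith) u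
  · intro u
    rw [hWd]
    refine abs_linF_le ?_ u
    have h1 : |lam - a / b| ≤ 1 := by
      rw [hlam]
      refine hδ.trans (Real.exp_le_one_iff.mpr ?_)
      rw [neg_nonpos]
      positivity
    rw [abs_le] at h1 ⊢
    constructor <;> linarith [h1.1, h1.2]

end final

theorem finite_irrationality_measure (p q : ℕ) (hp : 1 < p) (hq : 1 < q)
    (hindep : MultIndepPair p q) :
    ∃ ν : ℝ,
      {ab : ℤ × ℤ | 1 ≤ ab.2 ∧
        |Real.log q / Real.log p - (ab.1 : ℝ) / (ab.2 : ℝ)| < 1 / (ab.2 : ℝ) ^ ν}.Finite := by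
  obtain ⟨ν, hν⟩ := core hp hq hindep
  obtain ⟨H, hH⟩ := Filter.eventually_atTop.mp (hν.and (Filter.eventually_ge_atTop 2))
  set lam := Real.log q / Real.log p with hlam
  set B : ℝ := Real.exp H with hB
  set N : ℤ := ⌈(|lam| + 1) * B⌉ with hN
  -- `h = ⌈log b⌉ ≤ 2 log b` for large `b`, so the exponent `2 ν` works; the maximum with `0` makes
  -- `b ^ (-ν)` at most `1`, which bounds `a` in terms of `b`.
  refine ⟨2 * max ν 0, ((Set.finite_Icc (-N) N).prod (Set.finite_Icc 1 ⌈B⌉)).subset ?_⟩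
  rintro ⟨a, b⟩ ⟨hb, hab⟩
  dsimp only at hb hab
  have hbR : (1 : ℝ) ≤ b := by exact_mod_cast hb
  have hb0 : (0 : ℝ) < b := by linarith
  have hbB : (b : ℝ) ≤ B := by
    by_contra! hc
    have hlog : (H : ℝ) < Real.log b := (Real.lt_log_iff_exp_lt hb0).mpr hc
    set h := ⌈Real.log b⌉₊ with hh
    have h1 : Real.log b ≤ h := Nat.le_ceil _
    have h2 : (h : ℝ) < Real.log b + 1 := Nat.ceil_lt_add_one (Real.log_nonneg hbR)
    have h3 : H ≤ h := by exact_mod_cast (hlog.trans_le h1).le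
    obtain ⟨h4, h5⟩ := hH h h3
    have h5' : (2 : ℝ) ≤ h := by exact_mod_cast h5
    have h6 := h4 a b hb (by rw [← Real.exp_log hb0]; exact Real.exp_le_exp.mpr h1)
    refine absurd (hab.trans_le ?_) (not_lt.mpr h6.le)
    rw [Real.rpow_def_of_pos hb0, one_div, ← Real.exp_neg]
    apply Real.exp_le_exp.mpr
    rw [neg_le_neg_iff]
    have h7 : ν * h ≤ max ν 0 * h := by gcongr; exact le_max_left _ _
    have h8 : max ν 0 * h ≤ max ν 0 * (2 * Real.log b) := by
      gcongr
      linarith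
    linarith
  have h1 : |lam - a / b| < 1 := by
    refine hab.trans_le ?_
    rw [div_le_one (by positivity)]
    exact Real.one_le_rpow hbR (by positivity)
  have h2 : |(a : ℝ)| ≤ (|lam| + 1) * B := by
    have h3 : |(a : ℝ) / b| ≤ |lam| + 1 := by
      have h4 : (a : ℝ) / b = lam - (lam - a / b) := by ring
      rw [h4]
      exact (abs_sub _ _).trans (by linarith)
    rw [abs_div, abs_of_pos hb0, div_le_iff₀ hb0] at h3
    exact h3.trans (by gcongr)
  have h3 : |(a : ℝ)| ≤ N := h2.trans (Int.le_ceil _)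
  rw [abs_le] at h3
  refine ⟨⟨?_, ?_⟩, hb, ?_⟩
  · exact_mod_cast h3.1
  · exact_mod_cast h3.2
  · exact_mod_cast hbB.trans (Int.le_ceil _)
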